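/- H_n is a free right H^fn_n-module with basis {X^α f_Z : (α,Z) ∈ Π_n}. -/

import Mathlib

set_option maxHeartbeats 1000000

namespace HC

/-- Generators of the affine Hecke–Clifford superalgebra `H_n`. -/
inductive Gen (n : ℕ) : Type
  | X : Fin n → Gen n
  | Xinv : Fin n → Gen n
  | C : Fin n → Gen n
  | T : Fin (n - 1) → Gen n

/-- The node `i` of `Fin n`, for `i : Fin (n-1)` (1-based: the node `i`). -/
def lo {n : ℕ} (i : Fin (n - 1)) : Fin n :=
  ⟨i.val, by have := i.isLt; omega⟩

/-- The node `i+1` of `Fin n`, for `i : Fin (n-1)`. -/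
def hi {n : ℕ} (i : Fin (n - 1)) : Fin n :=
  ⟨i.val + 1, by have := i.isLt; omega⟩

variable (F : Type) [Field F]

/-- The free algebra on the generators. -/
abbrev FA (n : ℕ) : Type := FreeAlgebra F (Gen n)

noncomputable def fx {n : ℕ} (i : Fin n) : FA F n := FreeAlgebra.ι F (Gen.X i)
noncomputable def fxinv {n : ℕ} (i : Fin n) : FA F n := FreeAlgebra.ι F (Gen.Xinv i)
noncomputable def fc {n : ℕ} (i : Fin n) : FA F n := FreeAlgebra.ι F (Gen.C i)
noncomputable def ft {n : ℕ} (i : Fin (n - 1)) : FA F n := FreeAlgebra.ι F (Gen.T i)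

/-- The defining relations of the affine Hecke–Clifford superalgebra, with parameter
`q` and `ξ = q - q⁻¹`. -/
inductive Rel (q : F) (n : ℕ) : FA F n → FA F n → Prop
  | XXinv (i : Fin n) : Rel q n (fx F i * fxinv F i) 1
  | XinvX (i : Fin n) : Rel q n (fxinv F i * fx F i) 1
  | XX (i j : Fin n) : Rel q n (fx F i * fx F j) (fx F j * fx F i)
  | XiXi (i j : Fin n) : Rel q n (fxinv F i * fxinv F j) (fxinv F j * fxinv F i)
  | XXi (i j : Fin n) (h : i ≠ j) : Rel q n (fx F i * fxinv F j) (fxinv F j * fx F i)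
  | CC (i : Fin n) : Rel q n (fc F i * fc F i) 1
  | Canti (i j : Fin n) (h : i ≠ j) : Rel q n (fc F i * fc F j) (-(fc F j * fc F i))
  | CX (i : Fin n) : Rel q n (fc F i * fx F i) (fxinv F i * fc F i)
  | CXi (i : Fin n) : Rel q n (fc F i * fxinv F i) (fx F i * fc F i)
  | CXo (i j : Fin n) (h : i ≠ j) : Rel q n (fc F i * fx F j) (fx F j * fc F i)
  | CXio (i j : Fin n) (h : i ≠ j) : Rel q n (fc F i * fxinv F j) (fxinv F j * fc F i)
  | Tquad (i : Fin (n - 1)) : Rel q n (ft F i * ft F i) ((q - q⁻¹) • ft F i + 1)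
  | Tbraid (i j : Fin (n - 1)) (h : (j : ℕ) = (i : ℕ) + 1) :
      Rel q n (ft F i * ft F j * ft F i) (ft F j * ft F i * ft F j)
  | TTfar (i j : Fin (n - 1)) (h : (i : ℕ) + 1 < (j : ℕ)) :
      Rel q n (ft F i * ft F j) (ft F j * ft F i)
  | TC (i : Fin (n - 1)) : Rel q n (ft F i * fc F (lo i)) (fc F (hi i) * ft F i)
  | TCo (i : Fin (n - 1)) (j : Fin n) (h1 : j ≠ lo i) (h2 : j ≠ hi i) :
      Rel q n (ft F i * fc F j) (fc F j * ft F i)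
  | TXo (i : Fin (n - 1)) (j : Fin n) (h1 : j ≠ lo i) (h2 : j ≠ hi i) :
      Rel q n (ft F i * fx F j) (fx F j * ft F i)
  | TXio (i : Fin (n - 1)) (j : Fin n) (h1 : j ≠ lo i) (h2 : j ≠ hi i) :
      Rel q n (ft F i * fxinv F j) (fxinv F j * ft F i)
  | cross (i : Fin (n - 1)) :
      Rel q n ((ft F i + (q - q⁻¹) • (fc F (lo i) * fc F (hi i))) * fx F (lo i) * ft F i)
        (fx F (hi i))

/-- The affine Hecke–Clifford superalgebra `H_n` over `F` with parameter `q`. -/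
abbrev H (q : F) (n : ℕ) : Type := RingQuot (Rel F q n)

noncomputable def X (q : F) {n : ℕ} (i : Fin n) : H F q n :=
  RingQuot.mkAlgHom F (Rel F q n) (fx F i)

noncomputable def Xinv (q : F) {n : ℕ} (i : Fin n) : H F q n :=
  RingQuot.mkAlgHom F (Rel F q n) (fxinv F i)

noncomputable def C (q : F) {n : ℕ} (i : Fin n) : H F q n :=
  RingQuot.mkAlgHom F (Rel F q n) (fc F i)

noncomputable def T (q : F) {n : ℕ} (i : Fin (n - 1)) : H F q n :=
  RingQuot.mkAlgHom F (Rel F q n) (ft F i)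

/-- `q` is either a primitive root of unity of odd order (including `q = 1`)
or not a root of unity at all (and `q ≠ 0`). -/
def GoodParam (q : F) : Prop :=
  q ≠ 0 ∧ ((∃ m : ℕ, Odd m ∧ IsPrimitiveRoot q m) ∨ ∀ m : ℕ, 0 < m → q ^ m ≠ 1)

/-- `X_i^a` for an integer exponent `a ∈ ℤ`. -/
noncomputable def XZ (q : F) {n : ℕ} (i : Fin n) (a : ℤ) : H F q n :=
  if 0 ≤ a then X F q i ^ a.toNat else Xinv F q i ^ (-a).toNat

/-- The monomial `X^α = X_1^{α_1} ⋯ X_n^{α_n}` for `α ∈ ℤ^n`. -/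
noncomputable def Xmon (q : F) {n : ℕ} (α : Fin n → ℤ) : H F q n :=
  ((List.finRange n).map fun i => XZ F q i (α i)).prod

/-- The monomial `C^β = C_1^{β_1} ⋯ C_n^{β_n}` for `β ∈ {0,1}^n`. -/
noncomputable def Cmon (q : F) {n : ℕ} (β : Fin n → Bool) : H F q n :=
  ((List.finRange n).map fun i => if β i then C F q i else 1).prod

/-- The basic transposition `s_i = (i, i+1)` of `S_n`. -/
def s {n : ℕ} (i : Fin (n - 1)) : Equiv.Perm (Fin n) := Equiv.swap (lo i) (hi i)

/-- The Coxeter length (number of inversions) of a permutation of `Fin n`. -/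
def len {n : ℕ} (w : Equiv.Perm (Fin n)) : ℕ :=
  ((Finset.univ : Finset (Fin n × Fin n)).filter fun p => p.1 < p.2 ∧ w p.2 < w p.1).card

/-- `Tw` is the family of standard basis elements `T_w`, `w ∈ S_n`: it satisfies
`T_1 = 1`, `T_{s_i} = T_i`, and `T_{s_i w} = T_i T_w` whenever `ℓ(s_i w) = ℓ(w) + 1`.
These conditions determine the family uniquely. -/
def IsTFam (q : F) {n : ℕ} (Tw : Equiv.Perm (Fin n) → H F q n) : Prop :=
  Tw 1 = 1 ∧ (∀ i : Fin (n - 1), Tw (s i) = T F q i) ∧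
    ∀ (i : Fin (n - 1)) (w : Equiv.Perm (Fin n)),
      len (s i * w) = len w + 1 → Tw (s i * w) = T F q i * Tw w

/-- `h` is the quantum characteristic of `q`:  the smallest positive integer with
`q^{1-h} + q^{3-h} + ⋯ + q^{h-1} = 0`. -/
def qcharEq (q : F) (h : ℕ) : Prop :=
  0 < h ∧ (∑ k ∈ Finset.range h, q ^ (1 - (h : ℤ) + 2 * (k : ℤ))) = 0 ∧
    ∀ h' : ℕ, 0 < h' → h' < h →
      (∑ k ∈ Finset.range h', q ^ (1 - (h' : ℤ) + 2 * (k : ℤ))) ≠ 0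

/-- `i ∈ I = {0, 1, …, ℓ}` where `ℓ = (h-1)/2` (no condition if the quantum
characteristic is infinite). -/
def memI (q : F) (i : ℕ) : Prop := ∀ h : ℕ, qcharEq F q h → 2 * i + 1 ≤ h

/-- `q(i) = 2(q^{2i+1} + q^{-2i-1})/(q + q⁻¹)`. -/
noncomputable def qres (q : F) (i : ℕ) : F :=
  2 * (q ^ (2 * i + 1) + q⁻¹ ^ (2 * i + 1)) / (q + q⁻¹)

/-- Index of the block containing position `k` (0-based), for a composition given as a
list of parts. -/
def blk : List ℕ → ℕ → ℕ
  | [], _ => 0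
  | a :: rest, k => if k < a then 0 else blk rest (k - a) + 1

/-- Membership in the Young subgroup `S_μ ⊆ S_n`. -/
def InYoung {n : ℕ} (μ : List ℕ) (w : Equiv.Perm (Fin n)) : Prop :=
  ∀ k : Fin n, blk μ (w k).val = blk μ k.val

/-- `μ` is a composition of `n`. -/
def IsComposition (μ : List ℕ) (n : ℕ) : Prop := (∀ a ∈ μ, 0 < a) ∧ μ.sum = n

/-- The parabolic subalgebra generated by all `X_i^{±1}`, `C_i`, and the `T_j` with
`j` in a set `J` of admissible indices. -/
def parabolicJ (q : F) {n : ℕ} (J : Set (Fin (n - 1))) : Subalgebra F (H F q n) :=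
  Algebra.adjoin F
    ((Set.range fun i : Fin n => X F q i) ∪ (Set.range fun i : Fin n => Xinv F q i) ∪
      (Set.range fun i : Fin n => C F q i) ∪ {h | ∃ j ∈ J, h = T F q j})

/-- The parabolic subalgebra `H_μ` for a composition `μ`. -/
def parabolicC (q : F) {n : ℕ} (μ : List ℕ) : Subalgebra F (H F q n) :=
  parabolicJ F q {j | InYoung μ (s j)}

/-- The classical parabolic subalgebra `H^cl_μ`, generated by the `T_j` with `s_j ∈ S_μ`. -/
def clparC (q : F) {n : ℕ} (μ : List ℕ) : Subalgebra F (H F q n) :=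
  Algebra.adjoin F {h | ∃ j : Fin (n - 1), InYoung μ (s j) ∧ h = T F q j}

/-- The finite Hecke–Clifford subalgebra `H^fn_n`, generated by all `C_i` and `T_j`. -/
def Hfin (q : F) (n : ℕ) : Subalgebra F (H F q n) :=
  Algebra.adjoin F
    ((Set.range fun i : Fin n => C F q i) ∪ {h | ∃ j : Fin (n - 1), h = T F q j})

/-- `x` is a minimal length `(S_μ, S_ν)`-double coset representative. -/
def IsMinDC {n : ℕ} (μ ν : List ℕ) (x : Equiv.Perm (Fin n)) : Prop :=
  ∀ u v : Equiv.Perm (Fin n), InYoung μ u → InYoung ν v → len x ≤ len (u * x * v)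

/-- `w ∈ S_μ x S_ν`. -/
def InDC {n : ℕ} (μ ν : List ℕ) (x w : Equiv.Perm (Fin n)) : Prop :=
  ∃ u v : Equiv.Perm (Fin n), InYoung μ u ∧ InYoung ν v ∧ w = u * x * v

/-- A covering step in the Bruhat order: multiplication by a reflection increasing length. -/
def BruhatStep {n : ℕ} (v w : Equiv.Perm (Fin n)) : Prop :=
  ∃ a b : Fin n, a ≠ b ∧ w = Equiv.swap a b * v ∧ len v < len w

/-- The Bruhat order on `S_n`. -/
def BruhatLE {n : ℕ} : Equiv.Perm (Fin n) → Equiv.Perm (Fin n) → Prop :=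
  Relation.ReflTransGen BruhatStep

/-- The space of `A`-equivariant linear maps between two representations of the
`F`-algebra `A`. -/
def eqvHoms {A : Type} [Ring A] [Algebra F A] {M N : Type}
    [AddCommGroup M] [Module F M] [AddCommGroup N] [Module F N]
    (ρM : A →ₐ[F] Module.End F M) (ρN : A →ₐ[F] Module.End F N) :
    Submodule F (M →ₗ[F] N) where
  carrier := {f | ∀ (x : A) (m : M), f (ρM x m) = ρN x (f m)}
  add_mem' := by
    intro f g hf hg x m
    simp only [LinearMap.add_apply, hf x m, hg x m, map_add]
  zero_mem' := by
    intro x m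
    simp only [LinearMap.zero_apply, map_zero]
  smul_mem' := by
    intro c f hf x m
    simp only [LinearMap.smul_apply, hf x m, map_smul]

/-- `(E, ρE, ι)` is the module induced along the algebra morphism `φ : B →ₐ A` from
the `B`-representation `(M, ρ)`, i.e. `E = A ⊗_B M`, characterized by its universal
property. -/
def IsInducedAlong {A B : Type} [Ring A] [Ring B] [Algebra F A] [Algebra F B]
    (φ : B →ₐ[F] A) {M : Type} [AddCommGroup M] [Module F M]
    (ρ : B →ₐ[F] Module.End F M) {E : Type} [AddCommGroup E] [Module F E]
    (ρE : A →ₐ[F] Module.End F E) (ι : M →ₗ[F] E) : Prop :=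
  (∀ (b : B) (m : M), ι (ρ b m) = ρE (φ b) (ι m)) ∧
    ∀ (P : Type) [AddCommGroup P] [Module F P],
      ∀ (ρP : A →ₐ[F] Module.End F P) (f : M →ₗ[F] P),
        (∀ (b : B) (m : M), f (ρ b m) = ρP (φ b) (f m)) →
        ∃! g : E →ₗ[F] P,
          (∀ (x : A) (e : E), g (ρE x e) = ρP x (g e)) ∧ ∀ m : M, g (ι m) = f m

/-- `δ` is the grading automorphism of the superalgebra `H_n`
(identity on even generators, `-1` on the odd generators `C_i`). -/
def IsGradingAut (q : F) {n : ℕ} (δ : H F q n →ₐ[F] H F q n) : Prop :=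
  (∀ i : Fin n, δ (X F q i) = X F q i) ∧ (∀ i : Fin n, δ (Xinv F q i) = Xinv F q i) ∧
    (∀ i : Fin n, δ (C F q i) = -C F q i) ∧ ∀ i : Fin (n - 1), δ (T F q i) = T F q i

/-- `τ` is the antiautomorphism of `H_n` with `τ(T_i) = T_i + ξ C_i C_{i+1}`,
`τ(C_j) = C_j`, `τ(X_j) = X_j`. -/
def IsTauAntiAut (q : F) {n : ℕ} (τ : H F q n →ₗ[F] H F q n) : Prop :=
  Function.Bijective τ ∧ (∀ a b : H F q n, τ (a * b) = τ b * τ a) ∧ τ 1 = 1 ∧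
    (∀ i : Fin (n - 1),
      τ (T F q i) = T F q i + (q - q⁻¹) • (C F q (lo i) * C F q (hi i))) ∧
    (∀ j : Fin n, τ (C F q j) = C F q j) ∧ (∀ j : Fin n, τ (X F q j) = X F q j) ∧
    ∀ j : Fin n, τ (Xinv F q j) = Xinv F q j

/-- `ρ'` is the representation of the subalgebra `B` obtained from the
`H_ν`-representation `ρν` by twisting with the isomorphism `φ_{x⁻¹}`
(determined by `X_i ↦ X_{x⁻¹ i}`, `C_i ↦ C_{x⁻¹ i}`, `T_w ↦ T_{x⁻¹ w x}`). -/
def IsTwistedRep (q : F) {n : ℕ} (ν : List ℕ) (x : Equiv.Perm (Fin n))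
    (B : Subalgebra F (H F q n)) {M : Type} [AddCommGroup M] [Module F M]
    (ρν : ↥(parabolicC F q (n := n) ν) →ₐ[F] Module.End F M)
    (ρ' : ↥B →ₐ[F] Module.End F M) : Prop :=
  (∀ (i : Fin n) (a : ↥B) (b : ↥(parabolicC F q (n := n) ν)),
      (a : H F q n) = X F q i → (b : H F q n) = X F q (x⁻¹ i) → ρ' a = ρν b) ∧
  (∀ (i : Fin n) (a : ↥B) (b : ↥(parabolicC F q (n := n) ν)),
      (a : H F q n) = Xinv F q i → (b : H F q n) = Xinv F q (x⁻¹ i) → ρ' a = ρν b) ∧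
  (∀ (i : Fin n) (a : ↥B) (b : ↥(parabolicC F q (n := n) ν)),
      (a : H F q n) = C F q i → (b : H F q n) = C F q (x⁻¹ i) → ρ' a = ρν b) ∧
  ∀ (j j' : Fin (n - 1)) (a : ↥B) (b : ↥(parabolicC F q (n := n) ν)),
      lo j' = x⁻¹ (lo j) → (a : H F q n) = T F q j → (b : H F q n) = T F q j' → ρ' a = ρν b

/-- The element `f = a_d X_1^d + ⋯ + a_1 X_1 + a_0` of `H_n`. -/
noncomputable def felem (q : F) (n d : ℕ) (aa : ℕ → F) : H F q n :=
  if h : 0 < n then ∑ i ∈ Finset.range (d + 1), aa i • X F q (⟨0, h⟩ : Fin n) ^ i else 0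

/-- The conditions on the coefficients of `f`: degree `d ≥ 1`, monic, and
`a_i = a_0 a_{d-i}`. -/
def GoodPoly (d : ℕ) (aa : ℕ → F) : Prop :=
  1 ≤ d ∧ aa d = 1 ∧ (∀ i ≤ d, aa i = aa 0 * aa (d - i)) ∧ ∀ i : ℕ, d < i → aa i = 0

/-- The relation generating the two-sided ideal `I_f` of `H_n`. -/
inductive CycRel (q : F) (n d : ℕ) (aa : ℕ → F) : H F q n → H F q n → Prop
  | rel : CycRel q n d aa (felem F q n d aa) 0

/-- The cyclotomic Hecke–Clifford superalgebra `H_n^f = H_n / I_f`. -/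
abbrev Hf (q : F) (n d : ℕ) (aa : ℕ → F) : Type := RingQuot (CycRel F q n d aa)

/-- The canonical quotient map `H_n → H_n^f`. -/
noncomputable def cyc (q : F) (n d : ℕ) (aa : ℕ → F) : H F q n →ₐ[F] Hf F q n d aa :=
  RingQuot.mkAlgHom F (CycRel F q n d aa)

noncomputable def Xf (q : F) (n d : ℕ) (aa : ℕ → F) (i : Fin n) : Hf F q n d aa :=
  cyc F q n d aa (X F q i)
noncomputable def Xinvf (q : F) (n d : ℕ) (aa : ℕ → F) (i : Fin n) : Hf F q n d aa :=
  cyc F q n d aa (Xinv F q i)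
noncomputable def Cf (q : F) (n d : ℕ) (aa : ℕ → F) (i : Fin n) : Hf F q n d aa :=
  cyc F q n d aa (C F q i)
noncomputable def Tf (q : F) (n d : ℕ) (aa : ℕ → F) (i : Fin (n - 1)) : Hf F q n d aa :=
  cyc F q n d aa (T F q i)

/-- `e` is the canonical embedding `H_k^f → H_N^f` (shifting all indices by `sh`;
for `sh = 0` this is the standard identification of `H_k^f` with a subalgebra of
`H_N^f`). -/
def IsCycEmb (q : F) (k N d : ℕ) (aa : ℕ → F) (sh : ℕ)
    (e : Hf F q k d aa →ₐ[F] Hf F q N d aa) : Prop :=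
  (∀ (i : Fin k) (i' : Fin N), (i' : ℕ) = sh + (i : ℕ) →
      e (Xf F q k d aa i) = Xf F q N d aa i') ∧
  (∀ (i : Fin k) (i' : Fin N), (i' : ℕ) = sh + (i : ℕ) →
      e (Xinvf F q k d aa i) = Xinvf F q N d aa i') ∧
  (∀ (i : Fin k) (i' : Fin N), (i' : ℕ) = sh + (i : ℕ) →
      e (Cf F q k d aa i) = Cf F q N d aa i') ∧
  ∀ (j : Fin (k - 1)) (j' : Fin (N - 1)), (j' : ℕ) = sh + (j : ℕ) →
      e (Tf F q k d aa j) = Tf F q N d aa j'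

/-- `δ` is the grading automorphism of the superalgebra `H_n^f`. -/
def IsCycGrading (q : F) (n d : ℕ) (aa : ℕ → F)
    (δ : Hf F q n d aa →ₐ[F] Hf F q n d aa) : Prop :=
  (∀ i : Fin n, δ (Xf F q n d aa i) = Xf F q n d aa i) ∧
  (∀ i : Fin n, δ (Xinvf F q n d aa i) = Xinvf F q n d aa i) ∧
  (∀ i : Fin n, δ (Cf F q n d aa i) = -Cf F q n d aa i) ∧
  ∀ j : Fin (n - 1), δ (Tf F q n d aa j) = Tf F q n d aa j

/-- The elements `f_1 = f`, `f_{i+1} = (T_i + ξ C_i C_{i+1}) f_i T_i` of `H_n`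
(0-based indexing: `fseq k = f_{k+1}`). -/
noncomputable def fseq (q : F) (n d : ℕ) (aa : ℕ → F) : ℕ → H F q n
  | 0 => felem F q n d aa
  | k + 1 =>
    if h : k < n - 1 then
      (T F q (⟨k, h⟩ : Fin (n - 1)) +
          (q - q⁻¹) • (C F q (lo (⟨k, h⟩ : Fin (n - 1))) *
            C F q (hi (⟨k, h⟩ : Fin (n - 1))))) *
        fseq q n d aa k * T F q (⟨k, h⟩ : Fin (n - 1))
    else 0

/-- `f_Z = f_{z_1} ⋯ f_{z_u}` for `Z = {z_1 < ⋯ < z_u} ⊆ {1,…,n}` (0-based). -/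
noncomputable def fZ (q : F) (n d : ℕ) (aa : ℕ → F) (Z : Finset (Fin n)) : H F q n :=
  ((Z.sort (· ≤ ·)).map fun z => fseq F q n d aa (z : ℕ)).prod

/-- The index set `Π_n`: pairs `(α, Z)` with `Z ⊆ {1,…,n}` and `α ∈ ℤ^n` such that
`0 ≤ α_i < d` whenever `i ∉ Z`. -/
def PiIdx (n d : ℕ) : Type :=
  {p : (Fin n → ℤ) × Finset (Fin n) // ∀ i : Fin n, i ∉ p.2 → 0 ≤ p.1 i ∧ p.1 i < d}

set_option linter.unusedSimpArgs false

section RingIdentities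

variable {F R : Type*} [CommRing F] [Ring R] [Algebra F R] {ξ : F}

theorem mul_mul_of_mul_eq {a b c : R} (h : a * b = c) (z : R) : a * (b * z) = c * z := by
  rw [← mul_assoc, h]

theorem quad_mul_sub {U : R} (hq : U * U = ξ • U + 1) : U * (U - ξ • 1) = 1 := by
  linear_combination (norm := (simp only [mul_sub, mul_smul_comm, mul_one]; module)) hq

theorem quad_sub_mul {U : R} (hq : U * U = ξ • U + 1) : (U - ξ • 1) * U = 1 := by
  linear_combination (norm := (simp only [sub_mul, smul_mul_assoc, one_mul]; module)) hq

/-- The second mixed relation between `T_i` and the Clifford generators. -/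
theorem hecke_mul_clifford {U C₁ C₂ : R} (hq : U * U = ξ • U + 1) (hc : U * C₁ = C₂ * U) :
    U * C₂ = C₁ * U - ξ • C₁ + ξ • C₂ := by
  linear_combination (norm := (simp only [mul_add, add_mul, mul_sub, sub_mul, smul_mul_assoc,
    mul_smul_comm, mul_assoc, mul_one, one_mul, neg_mul]; module))
    -(U * C₂) * hq - U * hc * (U - ξ • 1) + hq * C₁ * (U - ξ • 1) + ξ • hc * (U - ξ • 1)
      + ξ • C₂ * hq

theorem hecke_mul_cliffordPair {U C₁ C₂ : R} (hc : U * C₁ = C₂ * U)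
    (hc' : U * C₂ = C₁ * U - ξ • C₁ + ξ • C₂) (ha : C₁ * C₂ = -(C₂ * C₁)) (h2 : C₂ * C₂ = 1) :
    U * (C₁ * C₂) = -(C₁ * C₂ * U) + ξ • (C₁ * C₂) + ξ • 1 := by
  linear_combination (norm := (simp only [mul_add, add_mul, mul_sub, sub_mul, smul_mul_assoc,
    mul_smul_comm, mul_assoc, mul_one, one_mul, neg_mul]; module))
    hc * C₂ + C₂ * hc' + ha * U - ξ • ha + ξ • h2

theorem cliffordPair_sq {C₁ C₂ : R} (ha : C₁ * C₂ = -(C₂ * C₁)) (h1 : C₁ * C₁ = 1)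
    (h2 : C₂ * C₂ = 1) : C₁ * C₂ * (C₁ * C₂) = -1 := by
  linear_combination (norm := (simp only [mul_add, add_mul, mul_sub, sub_mul, smul_mul_assoc,
    mul_smul_comm, mul_assoc, mul_one, one_mul, neg_mul, mul_neg]; module))
    C₁ * C₂ * ha - C₁ * h2 * C₁ - h1

theorem heckeStar_sq {U E : R} (hq : U * U = ξ • U + 1)
    (hE : U * E = -(E * U) + ξ • E + ξ • 1) (hEE : E * E = -1) :
    (U + ξ • E) * (U + ξ • E) = ξ • (U + ξ • E) + 1 := by
  linear_combination (norm := (simp only [mul_add, add_mul, mul_sub, sub_mul, smul_mul_assoc,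
    mul_smul_comm, mul_assoc, mul_one, one_mul, neg_mul, mul_neg]; module))
    hq + ξ • hE + (ξ * ξ) • hEE

section Quadratic

variable {U E X₁ X₂ Y₁ Y₂ : R}

theorem quad_intertwine_lo (hx1 : U * X₁ = X₂ * U - ξ • X₂ - ξ • (Y₁ * E))
    (hx2 : U * X₂ = X₁ * U + ξ • X₂ - ξ • (Y₂ * E))
    (hy1 : U * Y₁ = Y₂ * U + ξ • Y₁ + ξ • (Y₂ * E))
    (hE : U * E = -(E * U) + ξ • E + ξ • 1) (hEE : E * E = -1) :
    (U * U - (ξ • U + 1)) * X₁ = X₁ * (U * U - (ξ • U + 1)) := by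
  linear_combination (norm := (simp only [mul_add, add_mul, mul_sub, sub_mul, smul_mul_assoc,
    mul_smul_comm, mul_assoc, mul_one, one_mul, neg_mul, mul_neg]; module))
    U * hx1 + hx2 * (U - ξ • 1) - ξ • hy1 * E - ξ • hx1 - ξ • (Y₂ * hE) - (ξ * ξ) • (Y₂ * hEE)

theorem quad_intertwine_hi (hx1 : U * X₁ = X₂ * U - ξ • X₂ - ξ • (Y₁ * E))
    (hx2 : U * X₂ = X₁ * U + ξ • X₂ - ξ • (Y₂ * E))
    (hy2 : U * Y₂ = Y₁ * U - ξ • Y₁ + ξ • (Y₁ * E))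
    (hE : U * E = -(E * U) + ξ • E + ξ • 1) (hEE : E * E = -1) :
    (U * U - (ξ • U + 1)) * X₂ = X₂ * (U * U - (ξ • U + 1)) := by
  linear_combination (norm := (simp only [mul_add, add_mul, mul_sub, sub_mul, smul_mul_assoc,
    mul_smul_comm, mul_assoc, mul_one, one_mul, neg_mul, mul_neg]; module))
    U * hx2 + hx1 * U - ξ • hy2 * E - ξ • (Y₁ * hE) - (ξ * ξ) • (Y₁ * hEE)

end Quadratic

section Braid

variable {U V C₁ C₂ C₃ X₁ X₂ X₃ : R}

/-- The relations of the finite Hecke–Clifford algebra of rank three, without the braid relation. -/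
structure RankThree (ξ : F) (U V C₁ C₂ C₃ : R) : Prop where
  U_sq : U * U = ξ • U + 1
  V_sq : V * V = ξ • V + 1
  U_C₁ : U * C₁ = C₂ * U
  U_C₂ : U * C₂ = C₁ * U - ξ • C₁ + ξ • C₂
  U_C₃ : U * C₃ = C₃ * U
  V_C₁ : V * C₁ = C₁ * V
  V_C₂ : V * C₂ = C₃ * V
  V_C₃ : V * C₃ = C₂ * V - ξ • C₂ + ξ • C₃
  C₁_sq : C₁ * C₁ = 1
  C₂_sq : C₂ * C₂ = 1
  C₃_sq : C₃ * C₃ = 1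
  C₂_C₁ : C₂ * C₁ = -(C₁ * C₂)
  C₃_C₁ : C₃ * C₁ = -(C₁ * C₃)
  C₃_C₂ : C₃ * C₂ = -(C₂ * C₃)

namespace RankThree

theorem braid_star (h : RankThree ξ U V C₁ C₂ C₃) :
    (U + ξ • (C₁ * C₂)) * (V + ξ • (C₂ * C₃)) * (U + ξ • (C₁ * C₂)) -
      (V + ξ • (C₂ * C₃)) * (U + ξ • (C₁ * C₂)) * (V + ξ • (C₂ * C₃)) =
    U * V * U - V * U * V := by
  simp only [mul_add, add_mul, mul_sub, sub_mul, smul_mul_assoc, mul_smul_comm, mul_assoc, mul_one,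
    one_mul, neg_mul, mul_neg, smul_neg, smul_add, smul_sub,
    h.U_sq, h.V_sq, h.U_C₁, h.U_C₂, h.U_C₃, h.V_C₁, h.V_C₂, h.V_C₃, h.C₁_sq, h.C₂_sq, h.C₃_sq,
    h.C₂_C₁, h.C₃_C₁, h.C₃_C₂, mul_mul_of_mul_eq h.U_sq, mul_mul_of_mul_eq h.V_sq,
    mul_mul_of_mul_eq h.U_C₁, mul_mul_of_mul_eq h.U_C₂, mul_mul_of_mul_eq h.U_C₃,
    mul_mul_of_mul_eq h.V_C₁, mul_mul_of_mul_eq h.V_C₂, mul_mul_of_mul_eq h.V_C₃,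
    mul_mul_of_mul_eq h.C₁_sq, mul_mul_of_mul_eq h.C₂_sq, mul_mul_of_mul_eq h.C₃_sq,
    mul_mul_of_mul_eq h.C₂_C₁, mul_mul_of_mul_eq h.C₃_C₁, mul_mul_of_mul_eq h.C₃_C₂]
  module

theorem braid_star_inv_inv (h : RankThree ξ U V C₁ C₂ C₃) :
    (U + ξ • (C₁ * C₂)) * (V - ξ • 1) * (U - ξ • 1) -
      (V - ξ • 1) * (U - ξ • 1) * (V + ξ • (C₂ * C₃)) = U * V * U - V * U * V := by
  simp only [mul_add, add_mul, mul_sub, sub_mul, smul_mul_assoc, mul_smul_comm, mul_assoc, mul_one,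
    one_mul, neg_mul, mul_neg, smul_neg, smul_add, smul_sub,
    h.U_sq, h.V_sq, h.U_C₁, h.U_C₂, h.U_C₃, h.V_C₁, h.V_C₂, h.V_C₃, mul_mul_of_mul_eq h.U_sq,
    mul_mul_of_mul_eq h.V_sq, mul_mul_of_mul_eq h.U_C₁, mul_mul_of_mul_eq h.U_C₂,
    mul_mul_of_mul_eq h.U_C₃, mul_mul_of_mul_eq h.V_C₁, mul_mul_of_mul_eq h.V_C₂,
    mul_mul_of_mul_eq h.V_C₃]
  module

theorem braid_inv_star (h : RankThree ξ U V C₁ C₂ C₃) :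
    (U - ξ • 1) * (V + ξ • (C₂ * C₃)) * U - V * (U + ξ • (C₁ * C₂)) * (V - ξ • 1) =
      U * V * U - V * U * V := by
  simp only [mul_add, add_mul, mul_sub, sub_mul, smul_mul_assoc, mul_smul_comm, mul_assoc, mul_one,
    one_mul, neg_mul, mul_neg, smul_neg, smul_add, smul_sub,
    h.U_sq, h.V_sq, h.U_C₁, h.U_C₂, h.U_C₃, h.V_C₁, h.V_C₂, h.V_C₃, mul_mul_of_mul_eq h.U_sq,
    mul_mul_of_mul_eq h.V_sq, mul_mul_of_mul_eq h.U_C₁, mul_mul_of_mul_eq h.U_C₂,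
    mul_mul_of_mul_eq h.U_C₃, mul_mul_of_mul_eq h.V_C₁, mul_mul_of_mul_eq h.V_C₂,
    mul_mul_of_mul_eq h.V_C₃]
  module

theorem braid_mul_star (h : RankThree ξ U V C₁ C₂ C₃) :
    U * V * (U + ξ • (C₁ * C₂)) - (V + ξ • (C₂ * C₃)) * U * V = U * V * U - V * U * V := by
  simp only [mul_add, add_mul, smul_mul_assoc, mul_smul_comm, mul_assoc, h.U_C₁, h.V_C₂, h.U_C₃,
    mul_mul_of_mul_eq h.U_C₁, mul_mul_of_mul_eq h.V_C₁, mul_mul_of_mul_eq h.U_C₃]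
  module

theorem braid_intertwine_one (h : RankThree ξ U V C₁ C₂ C₃)
    (hVX : (V + ξ • (C₂ * C₃)) * X₁ = X₁ * (V + ξ • (C₂ * C₃)))
    (hUX : (U + ξ • (C₁ * C₂)) * X₃ = X₃ * (U + ξ • (C₁ * C₂)))
    (hU : (U + ξ • (C₁ * C₂)) * X₁ = X₂ * (U - ξ • 1))
    (hV : (V + ξ • (C₂ * C₃)) * X₂ = X₃ * (V - ξ • 1)) :
    (U * V * U - V * U * V) * X₁ = X₃ * (U * V * U - V * U * V) := by
  have h₁ := h.braid_star
  have h₂ := h.braid_star_inv_inv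
  generalize U + ξ • (C₁ * C₂) = Us at *
  generalize V + ξ • (C₂ * C₃) = Vs at *
  linear_combination (norm := (simp only [mul_add, add_mul, mul_sub, sub_mul, smul_mul_assoc,
    mul_smul_comm, mul_assoc, mul_one, one_mul, neg_mul, mul_neg]; module))
    -h₁ * X₁ + X₃ * h₂ + Us * Vs * hU + Us * hV * (U - ξ • 1)
      + hUX * (V - ξ • 1) * (U - ξ • 1) - Vs * Us * hVX - Vs * hU * Vs - hV * (U - ξ • 1) * Vs

theorem braid_intertwine_two (h : RankThree ξ U V C₁ C₂ C₃)
    (hVX : (V + ξ • (C₂ * C₃)) * X₁ = X₁ * (V + ξ • (C₂ * C₃)))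
    (hUX : (U + ξ • (C₁ * C₂)) * X₃ = X₃ * (U + ξ • (C₁ * C₂)))
    (hU : (U + ξ • (C₁ * C₂)) * X₁ = X₂ * (U - ξ • 1))
    (hU' : (U + ξ • (C₁ * C₂)) * X₂ = X₁ * U + ξ • X₂)
    (hV : (V + ξ • (C₂ * C₃)) * X₂ = X₃ * (V - ξ • 1))
    (hV' : (V + ξ • (C₂ * C₃)) * X₃ = X₂ * V + ξ • X₃) :
    (U * V * U - V * U * V) * X₂ = X₂ * (U * V * U - V * U * V) := by
  have h₁ := h.braid_star
  have h₂ := h.braid_inv_star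
  generalize U + ξ • (C₁ * C₂) = Us at *
  generalize V + ξ • (C₂ * C₃) = Vs at *
  linear_combination (norm := (simp only [mul_add, add_mul, mul_sub, sub_mul, smul_mul_assoc,
    mul_smul_comm, mul_assoc, mul_one, one_mul, neg_mul, mul_neg]; module))
    -h₁ * X₂ + X₂ * h₂ + Us * Vs * hU' + Us * hVX * U + hU * Vs * U + ξ • (Us * hV)
      + ξ • hUX * (V - ξ • 1) - Vs * Us * hV - Vs * hUX * (V - ξ • 1) - hV' * Us * (V - ξ • 1)

theorem braid_intertwine_three (h : RankThree ξ U V C₁ C₂ C₃)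
    (hVX : (V + ξ • (C₂ * C₃)) * X₁ = X₁ * (V + ξ • (C₂ * C₃)))
    (hUX : (U + ξ • (C₁ * C₂)) * X₃ = X₃ * (U + ξ • (C₁ * C₂)))
    (hU' : (U + ξ • (C₁ * C₂)) * X₂ = X₁ * U + ξ • X₂)
    (hV : (V + ξ • (C₂ * C₃)) * X₂ = X₃ * (V - ξ • 1))
    (hV' : (V + ξ • (C₂ * C₃)) * X₃ = X₂ * V + ξ • X₃) :
    (U * V * U - V * U * V) * X₃ = X₁ * (U * V * U - V * U * V) := by
  have h₁ := h.braid_star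
  have h₂ := h.braid_mul_star
  have h₃ := quad_sub_mul h.V_sq
  have ha : C₁ * C₂ = -(C₂ * C₁) := by rw [h.C₂_C₁, neg_neg]
  have h₄ := heckeStar_sq h.U_sq (hecke_mul_cliffordPair h.U_C₁ h.U_C₂ ha h.C₂_sq)
    (cliffordPair_sq ha h.C₁_sq h.C₂_sq)
  generalize U + ξ • (C₁ * C₂) = Us at *
  generalize V + ξ • (C₂ * C₃) = Vs at *
  linear_combination (norm := (simp only [mul_add, add_mul, mul_sub, sub_mul, smul_mul_assoc,
    mul_smul_comm, mul_assoc, mul_one, one_mul, neg_mul, mul_neg]; module))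
    -h₁ * X₃ + X₁ * h₂ + Us * Vs * hUX + Us * hV' * Us + hU' * V * Us + ξ • hUX * Us
      - Vs * Us * hV' - Vs * hU' * V - hVX * U * V - ξ • (hV * V) - ξ • (Vs * hUX)
      - ξ • (hV' * Us) + ξ • (X₃ * h₄) - ξ • (X₃ * h₃)

end RankThree

end Braid

end RingIdentities

section RationalFunctions

variable (n : ℕ)

/-- Laurent polynomials in `n` variables. -/
abbrev Laurent : Type := AddMonoidAlgebra F (Fin n → ℤ)

/-- Rational functions in `n` variables. -/
abbrev RatFn : Type := FractionRing (Laurent F n)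

variable {n}

/-- The Laurent monomial with exponent vector `α`, as a rational function. -/
noncomputable def mono (α : Fin n → ℤ) : RatFn F n :=
  algebraMap (Laurent F n) (RatFn F n) (AddMonoidAlgebra.single α 1)

/-- The `i`-th variable, as a rational function. -/
noncomputable def var (i : Fin n) : RatFn F n := mono F (Pi.single i 1)

theorem mono_zero : mono F (0 : Fin n → ℤ) = 1 := by
  rw [mono, ← AddMonoidAlgebra.one_def, map_one]

theorem mono_add (α β : Fin n → ℤ) : mono F (α + β) = mono F α * mono F β := by
  rw [mono, mono, mono, ← map_mul, AddMonoidAlgebra.single_mul_single, mul_one]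

theorem mono_ne_zero (α : Fin n → ℤ) : mono F α ≠ 0 := by
  intro h
  have := mono_add F α (-α)
  rw [h, zero_mul, add_neg_cancel, mono_zero] at this
  exact one_ne_zero this

theorem mono_neg (α : Fin n → ℤ) : mono F (-α) = (mono F α)⁻¹ := by
  apply eq_inv_of_mul_eq_one_left
  rw [← mono_add, neg_add_cancel, mono_zero]

theorem linearIndependent_mono : LinearIndependent F (mono F (n := n)) := by
  have h : LinearIndependent F (fun α : Fin n → ℤ => AddMonoidAlgebra.single (R := F) α (1 : F)) :=
    (AddMonoidAlgebra.basis (Fin n → ℤ) F).linearIndependent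
  exact h.map' (IsScalarTower.toAlgHom F (Laurent F n) (RatFn F n)).toLinearMap
    (LinearMap.ker_eq_bot.2 (IsFractionRing.injective (Laurent F n) (RatFn F n)))

theorem mono_injective : Function.Injective (mono F (n := n)) :=
  (linearIndependent_mono F).injective

theorem subfield_eq_top (S : Subfield (RatFn F n)) (hF : ∀ c : F, algebraMap F _ c ∈ S)
    (hS : ∀ i, var F i ∈ S) : S = ⊤ := by
  have hmono : ∀ α : Fin n → ℤ, mono F α ∈ S := by
    let G : AddSubgroup (Fin n → ℤ) :=
      { carrier := {α | mono F α ∈ S}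
        add_mem' := fun {a b} ha hb => by
          simpa only [Set.mem_ofPred_eq, mono_add] using S.mul_mem ha hb
        zero_mem' := by simpa only [Set.mem_ofPred_eq, mono_zero] using S.one_mem
        neg_mem' := fun {a} ha => by
          simpa only [Set.mem_ofPred_eq, mono_neg] using S.inv_mem ha }
    intro α
    have : α ∈ G := by
      rw [← Finset.univ_sum_single α]
      refine G.sum_mem fun i _ => ?_
      have : (Pi.single i (α i) : Fin n → ℤ) = α i • Pi.single i 1 := by
        rw [← Pi.single_smul]; simp
      rw [this]
      exact G.zsmul_mem (hS i) _
    exact this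
  have hL : ∀ p : Laurent F n, algebraMap _ (RatFn F n) p ∈ S := by
    intro p
    induction p using AddMonoidAlgebra.induction_linear with
    | zero => simp
    | add p r hp hr => simpa using S.add_mem hp hr
    | single α c =>
      have : AddMonoidAlgebra.single α c = algebraMap F (Laurent F n) c * AddMonoidAlgebra.single α 1 := by
        simp
      rw [this, map_mul, ← IsScalarTower.algebraMap_apply]
      exact S.mul_mem (hF c) (hmono α)
  rw [eq_top_iff]
  intro g _
  obtain ⟨a, b, -, rfl⟩ := IsFractionRing.div_surjective (A := Laurent F n) g
  exact S.div_mem (hL a) (hL b)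

/-- The automorphism of the field of rational functions induced by an automorphism of the lattice
of exponents. -/
noncomputable def latticeAut (e : (Fin n → ℤ) ≃+ (Fin n → ℤ)) : RatFn F n ≃ₐ[F] RatFn F n :=
  IsFractionRing.algEquivOfAlgEquiv (AddMonoidAlgebra.domCongr F F e)

theorem latticeAut_mono (e : (Fin n → ℤ) ≃+ (Fin n → ℤ)) (α : Fin n → ℤ) :
    latticeAut F e (mono F α) = mono F (e α) := by
  simp [latticeAut, mono]

theorem algHom_ext_mono {φ ψ : RatFn F n →ₐ[F] RatFn F n}
    (h : ∀ α, φ (mono F α) = ψ (mono F α)) : φ = ψ := by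
  have : (φ : RatFn F n →+* RatFn F n).eqLocusField (ψ : RatFn F n →+* RatFn F n) = ⊤ :=
    subfield_eq_top F _ (fun c => by simp [RingHom.eqLocusField]) (fun i => h (Pi.single i 1))
  refine AlgHom.ext fun x => ?_
  have hx : x ∈ (φ : RatFn F n →+* RatFn F n).eqLocusField (ψ : RatFn F n →+* RatFn F n) := by
    rw [this]; trivial
  exact hx

/-- Sign change of the `i`-th coordinate. -/
def flipLattice (i : Fin n) : (Fin n → ℤ) ≃+ (Fin n → ℤ) :=
  AddEquiv.piCongrRight fun j => if j = i then AddEquiv.neg ℤ else AddEquiv.refl ℤ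

/-- Interchange of the coordinates `i` and `i + 1`. -/
def swapLattice (i : Fin (n - 1)) : (Fin n → ℤ) ≃+ (Fin n → ℤ) :=
  AddEquiv.arrowCongr (s i) (AddEquiv.refl ℤ)

theorem flipLattice_apply (i : Fin n) (α : Fin n → ℤ) (j : Fin n) :
    flipLattice i α j = if j = i then -α j else α j := by
  simp only [flipLattice, AddEquiv.piCongrRight_apply]
  split_ifs <;> simp

theorem swapLattice_apply (i : Fin (n - 1)) (α : Fin n → ℤ) (j : Fin n) :
    swapLattice i α j = α (s i j) := by
  simp [swapLattice, s, AddEquiv.arrowCongr]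

theorem lo_ne_hi (i : Fin (n - 1)) : lo i ≠ hi i := by
  simp [lo, hi, Fin.ext_iff]

/-- The automorphism inverting the `i`-th variable. -/
noncomputable def flipAut (i : Fin n) : RatFn F n ≃ₐ[F] RatFn F n := latticeAut F (flipLattice i)

/-- The automorphism interchanging the variables `i` and `i + 1`. -/
noncomputable def swapAut (i : Fin (n - 1)) : RatFn F n ≃ₐ[F] RatFn F n :=
  latticeAut F (swapLattice i)

theorem flipAut_flipAut (i : Fin n) (g : RatFn F n) : flipAut F i (flipAut F i g) = g := by
  refine AlgHom.congr_fun (φ₁ := ((flipAut F i).trans (flipAut F i)).toAlgHom)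
    (φ₂ := AlgHom.id F _) (algHom_ext_mono F fun α => ?_) g
  change flipAut F i (flipAut F i (mono F α)) = mono F α
  simp only [flipAut, latticeAut_mono]
  congr 1
  funext k
  simp only [flipLattice_apply]
  split_ifs <;> simp

theorem flipAut_comm (i j : Fin n) (g : RatFn F n) :
    flipAut F i (flipAut F j g) = flipAut F j (flipAut F i g) := by
  refine AlgHom.congr_fun (φ₁ := ((flipAut F j).trans (flipAut F i)).toAlgHom)
    (φ₂ := ((flipAut F i).trans (flipAut F j)).toAlgHom) (algHom_ext_mono F fun α => ?_) g
  change flipAut F i (flipAut F j (mono F α)) = flipAut F j (flipAut F i (mono F α))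
  simp only [flipAut, latticeAut_mono]
  congr 1
  funext k
  simp only [flipLattice_apply]
  split_ifs <;> simp

theorem swapAut_flipAut (i : Fin (n - 1)) (j : Fin n) (g : RatFn F n) :
    swapAut F i (flipAut F j g) = flipAut F (s i j) (swapAut F i g) := by
  refine AlgHom.congr_fun (φ₁ := ((flipAut F j).trans (swapAut F i)).toAlgHom)
    (φ₂ := ((swapAut F i).trans (flipAut F (s i j))).toAlgHom) (algHom_ext_mono F fun α => ?_) g
  change swapAut F i (flipAut F j (mono F α)) = flipAut F (s i j) (swapAut F i (mono F α))
  simp only [flipAut, swapAut, latticeAut_mono]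
  congr 1
  funext k
  simp only [flipLattice_apply, swapLattice_apply]
  have : s i k = j ↔ k = s i j := by
    rw [← Equiv.apply_eq_iff_eq (s i)]; simp [s]
  simp only [this]

theorem flipAut_var_self (i : Fin n) : flipAut F i (var F i) = (var F i)⁻¹ := by
  rw [flipAut, var, latticeAut_mono, ← mono_neg]
  congr 1
  ext k
  rw [flipLattice_apply]
  by_cases h : k = i <;> simp [h]

theorem flipAut_var_of_ne {i j : Fin n} (h : i ≠ j) : flipAut F i (var F j) = var F j := by
  rw [flipAut, var, latticeAut_mono]
  congr 1
  ext k
  rw [flipLattice_apply]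
  by_cases hk : k = i
  · simp [hk, Pi.single_eq_of_ne h]
  · simp [hk]

theorem swapAut_var (i : Fin (n - 1)) (j : Fin n) :
    swapAut F i (var F j) = var F (s i j) := by
  rw [swapAut, var, latticeAut_mono, var]
  congr 1
  ext k
  have : s i k = j ↔ k = s i j := by
    rw [← Equiv.apply_eq_iff_eq (s i)]; simp [s]
  simp only [swapLattice_apply, Pi.single_apply, this]

theorem s_lo (i : Fin (n - 1)) : s i (lo i) = hi i := by simp [s]

theorem s_hi (i : Fin (n - 1)) : s i (hi i) = lo i := by simp [s]

theorem s_of_ne {i : Fin (n - 1)} {j : Fin n} (h₁ : j ≠ lo i) (h₂ : j ≠ hi i) : s i j = j :=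
  Equiv.swap_apply_of_ne_of_ne h₁ h₂

theorem var_ne_zero (i : Fin n) : var F i ≠ 0 := mono_ne_zero F _

theorem var_sub_ne_zero {i j : Fin n} (h : i ≠ j) : var F i - var F j ≠ 0 := by
  intro h'
  have := congrFun (mono_injective F (sub_eq_zero.1 h')) i
  simp [Pi.single_eq_of_ne h] at this

theorem var_mul_sub_one_ne_zero {i j : Fin n} (h : i ≠ j) : var F i * var F j - 1 ≠ 0 := by
  intro h'
  rw [var, var, ← mono_add, ← mono_zero] at h'
  have := congrFun (mono_injective F (sub_eq_zero.1 h')) i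
  simp [Pi.single_eq_of_ne h] at this

end RationalFunctions

section CrossRelation

variable {F} {R : Type*} [Ring R] [Algebra F R] {ξ : F} {U E X₁ X₂ Y₁ Y₂ : R}

theorem star_mul_lo (hq : U * U = ξ • U + 1) (hcr : (U + ξ • E) * X₁ * U = X₂) :
    (U + ξ • E) * X₁ = X₂ * (U - ξ • 1) := by
  rw [← hcr, mul_assoc _ U, quad_mul_sub hq, mul_one]

theorem star_mul_hi (hq : U * U = ξ • U + 1) (hE : U * E = -(E * U) + ξ • E + ξ • 1)
    (hEE : E * E = -1) (hcr : (U + ξ • E) * X₁ * U = X₂) :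
    (U + ξ • E) * X₂ = X₁ * U + ξ • X₂ := by
  have h := quad_sub_mul (heckeStar_sq hq hE hEE)
  have : (U + ξ • E - ξ • 1) * X₂ = X₁ * U := by
    rw [← hcr, ← mul_assoc, ← mul_assoc, h, one_mul]
  rw [sub_mul, smul_mul_assoc, one_mul] at this
  rw [← this]
  abel

theorem mul_inv_hi (hq : U * U = ξ • U + 1) (hE : U * E = -(E * U) + ξ • E + ξ • 1)
    (hEE : E * E = -1) (hcr : (U + ξ • E) * X₁ * U = X₂) (h1 : Y₁ * X₁ = 1)
    (h2 : X₂ * Y₂ = 1) : U * Y₂ = Y₁ * U - ξ • Y₁ + ξ • (Y₁ * E) := by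
  have h := quad_sub_mul (heckeStar_sq hq hE hEE)
  have h3 : U * Y₂ = Y₁ * (U + ξ • E - ξ • 1) * X₂ * Y₂ := by
    rw [← hcr, ← mul_assoc, ← mul_assoc, mul_assoc Y₁, h, mul_one, h1, one_mul]
  rw [h3, mul_assoc _ X₂, h2, mul_one, mul_sub, mul_add, mul_smul_comm, mul_smul_comm, mul_one]
  abel

theorem mul_inv_lo (hq : U * U = ξ • U + 1) (hE : U * E = -(E * U) + ξ • E + ξ • 1)
    (hEE : E * E = -1) (h : U * Y₂ = Y₁ * U - ξ • Y₁ + ξ • (Y₁ * E)) :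
    U * Y₁ = Y₂ * U + ξ • Y₁ + ξ • (Y₂ * E) := by
  have hs := quad_sub_mul (heckeStar_sq hq hE hEE)
  have h' : U * Y₂ * (U + ξ • E) = Y₁ := by
    have : U * Y₂ = Y₁ * (U + ξ • E - ξ • 1) := by
      rw [h, mul_sub, mul_add, mul_smul_comm, mul_smul_comm, mul_one]; abel
    rw [this, mul_assoc, hs, mul_one]
  calc U * Y₁ = (U * U) * Y₂ * (U + ξ • E) := by rw [mul_assoc U U, mul_assoc U, h']
    _ = ξ • (U * Y₂ * (U + ξ • E)) + Y₂ * (U + ξ • E) := by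
      rw [hq, add_mul, add_mul, smul_mul_assoc, smul_mul_assoc, one_mul]
    _ = _ := by rw [h', mul_add, mul_smul_comm]; abel

end CrossRelation

section Relations

/-- Generators `C_i`, `T_i` of an algebra satisfying the relations of the finite Hecke–Clifford
superalgebra. -/
structure FinData (ξ : F) (n : ℕ) (A : Type*) [Ring A] [Algebra F A] where
  C : Fin n → A
  T : Fin (n - 1) → A
  C_sq : ∀ i, C i * C i = 1
  C_anti : ∀ {i j}, i ≠ j → C i * C j = -(C j * C i)
  T_sq : ∀ i, T i * T i = ξ • T i + 1
  T_braid : ∀ {i j : Fin (n - 1)}, (j : ℕ) = (i : ℕ) + 1 → T i * T j * T i = T j * T i * T j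
  T_far : ∀ {i j : Fin (n - 1)}, (i : ℕ) + 1 < (j : ℕ) → T i * T j = T j * T i
  T_mul_C_lo : ∀ i, T i * C (lo i) = C (hi i) * T i
  T_mul_C_of_ne : ∀ {i j}, j ≠ lo i → j ≠ hi i → T i * C j = C j * T i

/-- Generators of an algebra satisfying the relations of the affine Hecke–Clifford
superalgebra. -/
structure AffData (ξ : F) (n : ℕ) (A : Type*) [Ring A] [Algebra F A] extends
    FinData F ξ n A where
  X : Fin n → A
  Xinv : Fin n → A
  X_mul_Xinv : ∀ i, X i * Xinv i = 1
  Xinv_mul_X : ∀ i, Xinv i * X i = 1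
  X_commute : ∀ i j, Commute (X i) (X j)
  C_mul_X : ∀ i, C i * X i = Xinv i * C i
  C_mul_X_of_ne : ∀ {i j}, i ≠ j → C i * X j = X j * C i
  T_mul_X_of_ne : ∀ {i j}, j ≠ lo i → j ≠ hi i → T i * X j = X j * T i
  T_cross : ∀ i, (T i + ξ • (C (lo i) * C (hi i))) * X (lo i) * T i = X (hi i)

variable {F} {ξ : F} {n : ℕ} {A : Type*} [Ring A] [Algebra F A]

namespace FinData

variable (D : FinData F ξ n A)

theorem T_mul_C_hi (i : Fin (n - 1)) :
    D.T i * D.C (hi i) = D.C (lo i) * D.T i - ξ • D.C (lo i) + ξ • D.C (hi i) :=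
  hecke_mul_clifford (D.T_sq i) (D.T_mul_C_lo i)

/-- The product `C_i C_{i+1}`. -/
def CC (i : Fin (n - 1)) : A := D.C (lo i) * D.C (hi i)

/-- The element `T_i + ξ C_i C_{i+1}`. -/
def Tstar (i : Fin (n - 1)) : A := D.T i + ξ • D.CC i

theorem T_mul_CC (i : Fin (n - 1)) :
    D.T i * D.CC i = -(D.CC i * D.T i) + ξ • D.CC i + ξ • 1 :=
  hecke_mul_cliffordPair (D.T_mul_C_lo i) (D.T_mul_C_hi i) (D.C_anti (lo_ne_hi i)) (D.C_sq _)

theorem CC_sq (i : Fin (n - 1)) : D.CC i * D.CC i = -1 :=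
  cliffordPair_sq (D.C_anti (lo_ne_hi i)) (D.C_sq _) (D.C_sq _)

theorem Tstar_sq (i : Fin (n - 1)) : D.Tstar i * D.Tstar i = ξ • D.Tstar i + 1 :=
  heckeStar_sq (D.T_sq i) (D.T_mul_CC i) (D.CC_sq i)

theorem CC_mul_C_lo (i : Fin (n - 1)) : D.CC i * D.C (lo i) = -D.C (hi i) := by
  rw [CC, D.C_anti (lo_ne_hi i), neg_mul, mul_assoc, D.C_sq, mul_one]

theorem CC_mul_C_hi (i : Fin (n - 1)) : D.CC i * D.C (hi i) = D.C (lo i) := by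
  rw [CC, mul_assoc, D.C_sq, mul_one]

theorem C_hi_mul_CC (i : Fin (n - 1)) : D.C (hi i) * D.CC i = -D.C (lo i) := by
  rw [CC, D.C_anti (lo_ne_hi i), mul_neg, ← mul_assoc, D.C_sq, one_mul]

theorem C_lo_mul_CC (i : Fin (n - 1)) : D.C (lo i) * D.CC i = D.C (hi i) := by
  rw [CC, ← mul_assoc, D.C_sq, one_mul]

theorem CC_mul_C_of_ne {i : Fin (n - 1)} {j : Fin n} (h1 : j ≠ lo i) (h2 : j ≠ hi i) :
    D.CC i * D.C j = D.C j * D.CC i := by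
  rw [CC, mul_assoc, D.C_anti h2.symm, mul_neg, ← mul_assoc, D.C_anti h1.symm, neg_mul, neg_neg,
    mul_assoc]

/-- The subalgebra generated by the `C_i` and the `T_i`. -/
def fin : Subalgebra F A := Algebra.adjoin F (Set.range D.C ∪ {h | ∃ j, h = D.T j})

theorem C_mem (i : Fin n) : D.C i ∈ D.fin :=
  Algebra.subset_adjoin (Or.inl ⟨i, rfl⟩)

theorem T_mem (i : Fin (n - 1)) : D.T i ∈ D.fin :=
  Algebra.subset_adjoin (Or.inr ⟨i, rfl⟩)

theorem CC_mem (i : Fin (n - 1)) : D.CC i ∈ D.fin := mul_mem (D.C_mem _) (D.C_mem _)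

theorem Tstar_mem (i : Fin (n - 1)) : D.Tstar i ∈ D.fin :=
  add_mem (D.T_mem i) (D.fin.smul_mem (D.CC_mem i) ξ)

end FinData

namespace AffData

variable (D : AffData F ξ n A)

/-- The unit given by `X_i`. -/
def unit (i : Fin n) : Aˣ := ⟨D.X i, D.Xinv i, D.X_mul_Xinv i, D.Xinv_mul_X i⟩

theorem unit_commute (i j : Fin n) : Commute (D.unit i) (D.unit j) :=
  Units.ext (D.X_commute i j)

theorem Xinv_commute (i j : Fin n) : Commute (D.Xinv i) (D.Xinv j) :=
  congrArg Units.val (D.unit_commute i j).inv_inv.eq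

theorem Xinv_commute_X (i j : Fin n) : Commute (D.Xinv i) (D.X j) :=
  congrArg Units.val (D.unit_commute i j).inv_left.eq

theorem C_mul_Xinv (i : Fin n) : D.C i * D.Xinv i = D.X i * D.C i := by
  have h := D.C_mul_X i
  have h' : D.C i * (D.C i * D.X i) * D.C i = D.C i * (D.Xinv i * D.C i) * D.C i := by rw [h]
  rw [← mul_assoc, D.C_sq, one_mul, ← mul_assoc, mul_assoc, D.C_sq, mul_one] at h'
  exact h'.symm

theorem C_mul_Xinv_of_ne {i j : Fin n} (h : i ≠ j) : D.C i * D.Xinv j = D.Xinv j * D.C i := by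
  have := D.C_mul_X_of_ne h
  calc D.C i * D.Xinv j = D.Xinv j * (D.X j * D.C i) * D.Xinv j := by
        rw [← mul_assoc, D.Xinv_mul_X, one_mul]
    _ = _ := by rw [← this, mul_assoc, mul_assoc, D.X_mul_Xinv, mul_one]

theorem T_mul_Xinv_of_ne {i : Fin (n - 1)} {j : Fin n} (h1 : j ≠ lo i) (h2 : j ≠ hi i) :
    D.T i * D.Xinv j = D.Xinv j * D.T i := by
  have := D.T_mul_X_of_ne h1 h2
  calc D.T i * D.Xinv j = D.Xinv j * (D.X j * D.T i) * D.Xinv j := by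
        rw [← mul_assoc, D.Xinv_mul_X, one_mul]
    _ = _ := by rw [← this, mul_assoc, mul_assoc, D.X_mul_Xinv, mul_one]

theorem Tstar_mul_X_lo (i : Fin (n - 1)) :
    D.Tstar i * D.X (lo i) = D.X (hi i) * (D.T i - ξ • 1) :=
  star_mul_lo (D.T_sq i) (D.T_cross i)

theorem Tstar_mul_X_hi (i : Fin (n - 1)) :
    D.Tstar i * D.X (hi i) = D.X (lo i) * D.T i + ξ • D.X (hi i) :=
  star_mul_hi (D.T_sq i) (D.T_mul_CC i) (D.CC_sq i) (D.T_cross i)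

theorem CC_mul_X_lo (i : Fin (n - 1)) : D.CC i * D.X (lo i) = D.Xinv (lo i) * D.CC i := by
  rw [FinData.CC, mul_assoc, D.C_mul_X_of_ne (lo_ne_hi i).symm, ← mul_assoc, D.C_mul_X, mul_assoc]

theorem CC_mul_X_hi (i : Fin (n - 1)) : D.CC i * D.X (hi i) = D.Xinv (hi i) * D.CC i := by
  rw [FinData.CC, mul_assoc, D.C_mul_X, ← mul_assoc, D.C_mul_Xinv_of_ne (lo_ne_hi i), mul_assoc]

theorem T_mul_X_lo (i : Fin (n - 1)) : D.T i * D.X (lo i) =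
    D.X (hi i) * D.T i - ξ • D.X (hi i) - ξ • (D.Xinv (lo i) * D.CC i) := by
  have h := D.Tstar_mul_X_lo i
  rw [FinData.Tstar, add_mul, smul_mul_assoc, CC_mul_X_lo, mul_sub, mul_smul_comm, mul_one] at h
  rw [← h, add_sub_cancel_right]

theorem T_mul_X_hi (i : Fin (n - 1)) : D.T i * D.X (hi i) =
    D.X (lo i) * D.T i + ξ • D.X (hi i) - ξ • (D.Xinv (hi i) * D.CC i) := by
  have h := D.Tstar_mul_X_hi i
  rw [FinData.Tstar, add_mul, smul_mul_assoc, CC_mul_X_hi] at h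
  rw [← h, add_sub_cancel_right]

theorem T_mul_Xinv_hi (i : Fin (n - 1)) : D.T i * D.Xinv (hi i) =
    D.Xinv (lo i) * D.T i - ξ • D.Xinv (lo i) + ξ • (D.Xinv (lo i) * D.CC i) :=
  mul_inv_hi (D.T_sq i) (D.T_mul_CC i) (D.CC_sq i) (D.T_cross i) (D.Xinv_mul_X _)
    (D.X_mul_Xinv _)

theorem T_mul_Xinv_lo (i : Fin (n - 1)) : D.T i * D.Xinv (lo i) =
    D.Xinv (hi i) * D.T i + ξ • D.Xinv (lo i) + ξ • (D.Xinv (hi i) * D.CC i) :=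
  mul_inv_lo (D.T_sq i) (D.T_mul_CC i) (D.CC_sq i) (D.T_mul_Xinv_hi i)

end AffData

end Relations

section Standard

variable {F} (q : F) (n : ℕ)

/-- The standard generators of `H_n`. -/
noncomputable def affData : AffData F (q - q⁻¹) n (H F q n) where
  C := C F q
  T := T F q
  X := X F q
  Xinv := Xinv F q
  C_sq i := (map_mul _ _ _).symm.trans
    ((RingQuot.mkAlgHom_rel F (Rel.CC (q := q) i)).trans (map_one _))
  C_anti {i j} h := (map_mul _ _ _).symm.trans
    ((RingQuot.mkAlgHom_rel F (Rel.Canti (q := q) i j h)).trans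
      ((map_neg _ _).trans (congrArg Neg.neg (map_mul _ _ _))))
  T_sq i := (map_mul _ _ _).symm.trans
    ((RingQuot.mkAlgHom_rel F (Rel.Tquad (q := q) i)).trans
      ((map_add _ _ _).trans (congrArg₂ _ (map_smul _ _ _) (map_one _))))
  T_braid {i j} h := by
    have := RingQuot.mkAlgHom_rel F (Rel.Tbraid (q := q) i j h)
    rw [map_mul, map_mul, map_mul, map_mul] at this
    exact this
  T_far {i j} h := by
    have := RingQuot.mkAlgHom_rel F (Rel.TTfar (q := q) i j h)
    rw [map_mul, map_mul] at this
    exact this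
  T_mul_C_lo i := by
    have := RingQuot.mkAlgHom_rel F (Rel.TC (q := q) i)
    rw [map_mul, map_mul] at this
    exact this
  T_mul_C_of_ne {i j} h1 h2 := by
    have := RingQuot.mkAlgHom_rel F (Rel.TCo (q := q) i j h1 h2)
    rw [map_mul, map_mul] at this
    exact this
  X_mul_Xinv i := (map_mul _ _ _).symm.trans
    ((RingQuot.mkAlgHom_rel F (Rel.XXinv (q := q) i)).trans (map_one _))
  Xinv_mul_X i := (map_mul _ _ _).symm.trans
    ((RingQuot.mkAlgHom_rel F (Rel.XinvX (q := q) i)).trans (map_one _))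
  X_commute i j := by
    have := RingQuot.mkAlgHom_rel F (Rel.XX (q := q) i j)
    rw [map_mul, map_mul] at this
    exact this
  C_mul_X i := by
    have := RingQuot.mkAlgHom_rel F (Rel.CX (q := q) i)
    rw [map_mul, map_mul] at this
    exact this
  C_mul_X_of_ne {i j} h := by
    have := RingQuot.mkAlgHom_rel F (Rel.CXo (q := q) i j h)
    rw [map_mul, map_mul] at this
    exact this
  T_mul_X_of_ne {i j} h1 h2 := by
    have := RingQuot.mkAlgHom_rel F (Rel.TXo (q := q) i j h1 h2)
    rw [map_mul, map_mul] at this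
    exact this
  T_cross i := by
    have := RingQuot.mkAlgHom_rel F (Rel.cross (q := q) i)
    rw [map_mul, map_mul, map_add, map_smul, map_mul] at this
    exact this

variable {q n} {R : Type*} [Ring R] [Algebra F R]

/-- Data satisfying the relations of `H_n` extend to a homomorphism out of `H_n`. -/
noncomputable def AffData.lift (D : AffData F (q - q⁻¹) n R) : H F q n →ₐ[F] R :=
  RingQuot.liftAlgHom F ⟨FreeAlgebra.lift F fun g => match g with
    | Gen.X i => D.X i
    | Gen.Xinv i => D.Xinv i
    | Gen.C i => D.C i
    | Gen.T i => D.T i, by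
    intro x y h
    induction h <;>
      simp only [fx, fxinv, fc, ft, map_mul, map_add, map_neg, map_smul, map_one,
        FreeAlgebra.lift_ι_apply]
    case XXinv i => exact D.X_mul_Xinv i
    case XinvX i => exact D.Xinv_mul_X i
    case XX i j => exact D.X_commute i j
    case XiXi i j => exact D.Xinv_commute i j
    case XXi i j h => exact (D.Xinv_commute_X j i).symm
    case CC i => exact D.C_sq i
    case Canti i j h => exact D.C_anti h
    case CX i => exact D.C_mul_X i
    case CXi i => exact D.C_mul_Xinv i
    case CXo i j h => exact D.C_mul_X_of_ne h
    case CXio i j h => exact D.C_mul_Xinv_of_ne h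
    case Tquad i => exact D.T_sq i
    case Tbraid i j h => exact D.T_braid h
    case TTfar i j h => exact D.T_far h
    case TC i => exact D.T_mul_C_lo i
    case TCo i j h1 h2 => exact D.T_mul_C_of_ne h1 h2
    case TXo i j h1 h2 => exact D.T_mul_X_of_ne h1 h2
    case TXio i j h1 h2 => exact D.T_mul_Xinv_of_ne h1 h2
    case cross i => exact D.T_cross i⟩

theorem AffData.lift_X (D : AffData F (q - q⁻¹) n R) (i : Fin n) :
    D.lift ((affData q n).X i) = D.X i := by
  simp [AffData.lift, affData, HC.X, fx]

theorem AffData.lift_Xinv (D : AffData F (q - q⁻¹) n R) (i : Fin n) :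
    D.lift ((affData q n).Xinv i) = D.Xinv i := by
  simp [AffData.lift, affData, HC.Xinv, fxinv]

theorem AffData.lift_C (D : AffData F (q - q⁻¹) n R) (i : Fin n) :
    D.lift ((affData q n).C i) = D.C i := by
  simp [AffData.lift, affData, HC.C, fc]

theorem AffData.lift_T (D : AffData F (q - q⁻¹) n R) (i : Fin (n - 1)) :
    D.lift ((affData q n).T i) = D.T i := by
  simp [AffData.lift, affData, HC.T, ft]

end Standard

section Operators

open TensorProduct

variable {F} {ξ : F} {n : ℕ} {A : Type*} [Ring A] [Algebra F A]

variable (F n A) in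
/-- The space of `A`-valued rational functions. -/
def RatMod : Type _ := RatFn F n ⊗[F] A

noncomputable instance : AddCommGroup (RatMod F n A) :=
  inferInstanceAs (AddCommGroup (RatFn F n ⊗[F] A))

noncomputable instance : Module F (RatMod F n A) :=
  inferInstanceAs (Module F (RatFn F n ⊗[F] A))

variable (F n A) in
/-- Linear operators on the space of `A`-valued rational functions. -/
abbrev RatEnd : Type _ := Module.End F (RatMod F n A)

/-- The pure tensor `k ⊗ a`. -/
noncomputable def tm (k : RatFn F n) (a : A) : RatMod F n A := k ⊗ₜ[F] a

theorem add_tm (k l : RatFn F n) (a : A) : tm (k + l) a = tm k a + tm l a :=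
  TensorProduct.add_tmul k l a

theorem tm_add (k : RatFn F n) (a b : A) : tm k (a + b) = tm k a + tm k b :=
  TensorProduct.tmul_add k a b

theorem smul_tm (c : F) (k : RatFn F n) (a : A) : tm (c • k) a = c • tm k a :=
  (TensorProduct.smul_tmul' c k a).symm

theorem tm_smul (c : F) (k : RatFn F n) (a : A) : tm k (c • a) = c • tm k a :=
  TensorProduct.tmul_smul c k a

theorem neg_tm (k : RatFn F n) (a : A) : tm (-k) a = -tm k a := by
  rw [← neg_one_smul F k, smul_tm, neg_one_smul]

theorem tm_neg (k : RatFn F n) (a : A) : tm k (-a) = -tm k a := by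
  rw [← neg_one_smul F a, tm_smul, neg_one_smul]

theorem sub_tm (k l : RatFn F n) (a : A) : tm (k - l) a = tm k a - tm l a := by
  rw [sub_eq_add_neg, add_tm, neg_tm, sub_eq_add_neg]

theorem tm_sub (k : RatFn F n) (a b : A) : tm k (a - b) = tm k a - tm k b := by
  rw [sub_eq_add_neg, tm_add, tm_neg, sub_eq_add_neg]

theorem zero_tm (a : A) : tm (0 : RatFn F n) a = 0 := TensorProduct.zero_tmul _ a

/-- The tensor product of two linear operators. -/
noncomputable def ratMap (f : RatFn F n →ₗ[F] RatFn F n) (g : A →ₗ[F] A) : RatEnd F n A :=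
  TensorProduct.map f g

theorem ratMap_tm (f : RatFn F n →ₗ[F] RatFn F n) (g : A →ₗ[F] A) (k : RatFn F n) (a : A) :
    ratMap f g (tm k a) = tm (f k) (g a) := rfl

theorem ratEnd_ext {f g : RatEnd F n A} (h : ∀ k a, f (tm k a) = g (tm k a)) : f = g :=
  TensorProduct.ext' h

variable (A) in
/-- Multiplication by a rational function. -/
noncomputable def opMul : RatFn F n →ₐ[F] RatEnd F n A :=
  AlgHom.ofLinearMap
    { toFun := fun g => ratMap (LinearMap.mulLeft F g) LinearMap.id
      map_add' := fun g h => ratEnd_ext fun k a => by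
        simp [ratMap_tm, add_mul, add_tm]
      map_smul' := fun c g => ratEnd_ext fun k a => by
        simp [ratMap_tm, smul_tm] }
    (ratEnd_ext fun k a => by simp [ratMap_tm])
    (fun g h => ratEnd_ext fun k a => by simp [ratMap_tm])

theorem opMul_tm (g k : RatFn F n) (a : A) : opMul A g (tm k a) = tm (g * k) a := rfl

theorem ratEnd_eq_zero {D : RatEnd F n A} (hD : ∀ i, ∃ g, D * opMul A (var F i) = opMul A g * D)
    (h1 : ∀ a, D (tm 1 a) = 0) : D = 0 := by
  by_contra hne
  let S : Subfield (RatFn F n) :=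
    { carrier := {g | ∃ g', D * opMul A g = opMul A g' * D}
      mul_mem' := by
        rintro a b ⟨a', ha⟩ ⟨b', hb⟩
        exact ⟨a' * b', by rw [map_mul, ← mul_assoc, ha, mul_assoc, hb, map_mul, mul_assoc]⟩
      one_mem' := ⟨1, by simp⟩
      add_mem' := by
        rintro a b ⟨a', ha⟩ ⟨b', hb⟩
        exact ⟨a' + b', by rw [map_add, mul_add, ha, hb, map_add, add_mul]⟩
      zero_mem' := ⟨0, by simp⟩
      neg_mem' := by
        rintro a ⟨a', ha⟩
        exact ⟨(-1 : F) • a', by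
          rw [← neg_one_smul F a, map_smul, mul_smul_comm, ha, map_smul, smul_mul_assoc]⟩
      inv_mem' := by
        rintro a ⟨a', ha⟩
        by_cases h0 : a = 0
        · exact ⟨0, by simp [h0]⟩
        have hinv : D * opMul A a * opMul A a⁻¹ = D := by
          rw [mul_assoc, ← map_mul, mul_inv_cancel₀ h0, map_one, mul_one]
        have h0' : a' ≠ 0 := by
          rintro rfl
          rw [ha, map_zero, zero_mul, zero_mul] at hinv
          exact hne hinv.symm
        refine ⟨a'⁻¹, ?_⟩
        conv_rhs => rw [← hinv]
        rw [ha, ← mul_assoc, ← mul_assoc, ← map_mul, inv_mul_cancel₀ h0', map_one, one_mul] }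
  have hS : S = ⊤ := subfield_eq_top F S
    (fun c => ⟨algebraMap F _ c, by rw [AlgHom.commutes, Algebra.commutes]⟩) hD
  refine hne (ratEnd_ext fun k a => ?_)
  obtain ⟨k', hk⟩ : k ∈ S := by rw [hS]; trivial
  have : tm k a = opMul A k (tm 1 a) := by rw [opMul_tm, mul_one]
  rw [this, ← Module.End.mul_apply, hk, Module.End.mul_apply, h1, map_zero,
    LinearMap.zero_apply]

variable (ξ)

/-- The coefficient `ξ X_{i+1} / (X_{i+1} - X_i)`. -/
noncomputable def psi (i : Fin (n - 1)) : RatFn F n :=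
  ξ • (var F (hi i) / (var F (hi i) - var F (lo i)))

/-- The coefficient `ξ / (X_i X_{i+1} - 1)`. -/
noncomputable def phi (i : Fin (n - 1)) : RatFn F n :=
  ξ • (var F (lo i) * var F (hi i) - 1)⁻¹

theorem flipAut_hi_psi (i : Fin (n - 1)) : flipAut F (hi i) (psi ξ i) = -phi ξ i := by
  have h1 := var_mul_sub_one_ne_zero F (lo_ne_hi i)
  have h0 := var_ne_zero F (hi i)
  rw [psi, phi, map_smul, map_div₀, map_sub, flipAut_var_self,
    flipAut_var_of_ne F (lo_ne_hi i).symm, ← smul_neg]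
  congr 1
  have h2 : (var F (hi i))⁻¹ - var F (lo i) = -(var F (lo i) * var F (hi i) - 1) / var F (hi i) := by
    field_simp
    ring
  rw [h2]
  field_simp

theorem flipAut_hi_phi (i : Fin (n - 1)) : flipAut F (hi i) (phi ξ i) = -psi ξ i := by
  rw [← neg_eq_iff_eq_neg, ← map_neg, ← flipAut_hi_psi ξ, flipAut_flipAut]

theorem flipAut_lo_psi (i : Fin (n - 1)) :
    flipAut F (lo i) (psi ξ i) = phi ξ i + algebraMap F _ ξ := by
  have h1 := var_mul_sub_one_ne_zero F (lo_ne_hi i)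
  have h0 := var_ne_zero F (lo i)
  rw [psi, phi, map_smul, map_div₀, map_sub, flipAut_var_self,
    flipAut_var_of_ne F (lo_ne_hi i), Algebra.algebraMap_eq_smul_one, ← smul_add]
  congr 1
  have h2 : var F (hi i) - (var F (lo i))⁻¹ = (var F (lo i) * var F (hi i) - 1) / var F (lo i) := by
    field_simp
  rw [h2, div_div_eq_mul_div, inv_eq_one_div, div_add' _ _ _ h1]
  congr 1
  ring

theorem flipAut_lo_phi (i : Fin (n - 1)) :
    flipAut F (lo i) (phi ξ i) = psi ξ i - algebraMap F _ ξ := by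
  rw [eq_sub_iff_add_eq, ← (flipAut F (lo i)).commutes, ← map_add, ← flipAut_lo_psi ξ,
    flipAut_flipAut]

theorem flipAut_psi_of_ne {i : Fin (n - 1)} {j : Fin n} (h1 : j ≠ lo i) (h2 : j ≠ hi i) :
    flipAut F j (psi ξ i) = psi ξ i := by
  rw [psi, map_smul, map_div₀, map_sub, flipAut_var_of_ne F h1, flipAut_var_of_ne F h2]

theorem flipAut_phi_of_ne {i : Fin (n - 1)} {j : Fin n} (h1 : j ≠ lo i) (h2 : j ≠ hi i) :
    flipAut F j (phi ξ i) = phi ξ i := by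
  rw [phi, map_smul, map_inv₀, map_sub, map_mul, flipAut_var_of_ne F h1, flipAut_var_of_ne F h2,
    map_one]

variable {ξ}

namespace FinData

variable (D : FinData F ξ n A)

/-- The operator of `C_i`. -/
noncomputable def opC (i : Fin n) : RatEnd F n A :=
  ratMap (flipAut F i).toLinearMap (LinearMap.mulLeft F (D.C i))

/-- The operator of `T_i`. -/
noncomputable def opT (i : Fin (n - 1)) : RatEnd F n A :=
  ratMap (swapAut F i).toLinearMap (LinearMap.mulLeft F (D.T i)) +
    ratMap
      (LinearMap.mulLeft F (psi ξ i) ∘ₗ (LinearMap.id - (swapAut F i).toLinearMap))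
      LinearMap.id +
    ratMap
      (LinearMap.mulLeft F (phi ξ i) ∘ₗ
        ((flipAut F (lo i)).toLinearMap ∘ₗ (flipAut F (hi i)).toLinearMap
          - (swapAut F i).toLinearMap))
      (LinearMap.mulLeft F (D.CC i))

theorem opC_tm (i : Fin n) (k : RatFn F n) (a : A) :
    D.opC i (tm k a) = tm (flipAut F i k) (D.C i * a) := by
  simp [opC, ratMap_tm]

theorem opT_tm (i : Fin (n - 1)) (k : RatFn F n) (a : A) :
    D.opT i (tm k a) = tm (swapAut F i k) (D.T i * a)
      + tm (psi ξ i * (k - swapAut F i k)) a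
      + tm (phi ξ i * (flipAut F (lo i) (flipAut F (hi i) k) - swapAut F i k))
        (D.CC i * a) := by
  simp [opT, ratMap_tm]

theorem opC_mul_opMul (i : Fin n) (g : RatFn F n) :
    D.opC i * opMul A g = opMul A (flipAut F i g) * D.opC i :=
  ratEnd_ext fun k a => by
    simp only [Module.End.mul_apply, opMul_tm, opC_tm, map_mul]

theorem opC_sq (i : Fin n) : D.opC i * D.opC i = 1 :=
  ratEnd_ext fun k a => by
    simp only [Module.End.mul_apply, opC_tm, flipAut_flipAut, ← mul_assoc, C_sq, one_mul,
      Module.End.one_apply]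

theorem opC_anti {i j : Fin n} (h : i ≠ j) : D.opC i * D.opC j = -(D.opC j * D.opC i) :=
  ratEnd_ext fun k a => by
    rw [LinearMap.neg_apply]
    simp only [Module.End.mul_apply, opC_tm, ← mul_assoc]
    rw [flipAut_comm, D.C_anti h, neg_mul, tm_neg]

theorem opC_mul_opC_tm (i : Fin (n - 1)) (k : RatFn F n) (a : A) :
    (D.opC (lo i) * D.opC (hi i)) (tm k a) =
      tm (flipAut F (lo i) (flipAut F (hi i) k)) (D.CC i * a) := by
  rw [Module.End.mul_apply, opC_tm, opC_tm, CC, mul_assoc]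

theorem opT_mul_opMul (i : Fin (n - 1)) (g : RatFn F n) :
    D.opT i * opMul A g = opMul A (swapAut F i g) * D.opT i
      + opMul A (psi ξ i * (g - swapAut F i g))
      + opMul A (phi ξ i * (flipAut F (lo i) (flipAut F (hi i) g) - swapAut F i g)) *
        (D.opC (lo i) * D.opC (hi i)) := by
  refine ratEnd_ext fun k a => ?_
  rw [LinearMap.add_apply, LinearMap.add_apply, Module.End.mul_apply, Module.End.mul_apply,
    Module.End.mul_apply, opC_mul_opC_tm]
  simp only [opMul_tm, opT_tm, map_add, map_mul (flipAut F _), map_mul (swapAut F _)]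
  have h1 : psi ξ i * (g * k - swapAut F i g * swapAut F i k) =
      swapAut F i g * (psi ξ i * (k - swapAut F i k)) + psi ξ i * (g - swapAut F i g) * k := by
    ring
  have h2 : ∀ c c' : RatFn F n, phi ξ i * (c' * c - swapAut F i g * swapAut F i k) =
      swapAut F i g * (phi ξ i * (c - swapAut F i k))
        + phi ξ i * (c' - swapAut F i g) * c := fun c c' => by ring
  rw [h1, h2, add_tm, add_tm]
  abel

theorem opT_mul_opC_lo (i : Fin (n - 1)) :
    D.opT i * D.opC (lo i) = D.opC (hi i) * D.opT i := by
  refine ratEnd_ext fun k a => ?_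
  simp only [Module.End.mul_apply, opC_tm, opT_tm, map_add, map_mul, map_sub, flipAut_hi_psi,
    flipAut_hi_phi, swapAut_flipAut, s_lo, ← mul_assoc, D.T_mul_C_lo, D.CC_mul_C_lo, D.C_hi_mul_CC,
    flipAut_comm F (hi i) (lo i), flipAut_flipAut, neg_mul, neg_tm,
    tm_neg, neg_neg]
  abel

theorem opT_mul_opC_hi (i : Fin (n - 1)) : D.opT i * D.opC (hi i) =
    D.opC (lo i) * D.opT i - ξ • D.opC (lo i) + ξ • D.opC (hi i) := by
  refine ratEnd_ext fun k a => ?_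
  simp only [LinearMap.add_apply, LinearMap.sub_apply, LinearMap.smul_apply,
    Module.End.mul_apply, opC_tm, opT_tm, map_add, map_mul, map_sub, flipAut_lo_psi,
    flipAut_lo_phi, swapAut_flipAut, s_hi, ← mul_assoc, D.T_mul_C_hi, D.CC_mul_C_hi, D.C_lo_mul_CC,
    flipAut_flipAut, add_mul, sub_mul, mul_sub, add_tm, sub_tm,
    tm_add, tm_sub, smul_mul_assoc, tm_smul]
  simp only [← Algebra.smul_def, smul_tm]
  module

theorem opT_mul_opC_of_ne {i : Fin (n - 1)} {j : Fin n} (h1 : j ≠ lo i) (h2 : j ≠ hi i) :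
    D.opT i * D.opC j = D.opC j * D.opT i := by
  refine ratEnd_ext fun k a => ?_
  simp only [Module.End.mul_apply, opC_tm, opT_tm, map_add, map_mul, map_sub,
    flipAut_psi_of_ne ξ h1 h2, flipAut_phi_of_ne ξ h1 h2, swapAut_flipAut, s_of_ne h1 h2,
    ← mul_assoc, D.T_mul_C_of_ne h1 h2, D.CC_mul_C_of_ne h1 h2, flipAut_comm F j]

end FinData

end Operators

section Intertwining

variable {F} {R : Type*} [Ring R] [Algebra F R] {ξ : F} {U V E X₁ X₂ Y P : R}

theorem commutator_intertwine_left (hU : U * X₁ = X₂ * U + P) (h₁ : V * X₁ = X₁ * V)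
    (h₂ : V * X₂ = X₂ * V) (hP : V * P = P * V) :
    (U * V - V * U) * X₁ = X₂ * (U * V - V * U) := by
  linear_combination (norm := (simp only [mul_add, add_mul, mul_sub, sub_mul, mul_assoc]; abel))
    U * h₁ + hU * V - V * hU - h₂ * U - hP

theorem commutator_intertwine_right (hV : V * X₁ = X₂ * V + P) (h₁ : U * X₁ = X₁ * U)
    (h₂ : U * X₂ = X₂ * U) (hP : U * P = P * U) :
    (U * V - V * U) * X₁ = X₂ * (U * V - V * U) := by
  linear_combination (norm := (simp only [mul_add, add_mul, mul_sub, sub_mul, mul_assoc]; abel))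
    U * hV + h₂ * V + hP - V * h₁ - hV * U

theorem star_mul_lo_of_mul_lo (h : U * X₁ = X₂ * U - ξ • X₂ - ξ • (Y * E))
    (hE : E * X₁ = Y * E) : (U + ξ • E) * X₁ = X₂ * (U - ξ • 1) := by
  rw [add_mul, smul_mul_assoc, h, hE, mul_sub, mul_smul_comm, mul_one]
  abel

theorem star_mul_hi_of_mul_hi (h : U * X₂ = X₁ * U + ξ • X₂ - ξ • (Y * E))
    (hE : E * X₂ = Y * E) : (U + ξ • E) * X₂ = X₁ * U + ξ • X₂ := by
  linear_combination (norm := (simp only [add_mul, smul_mul_assoc]; module)) h + ξ • hE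

end Intertwining

section Operators

variable {F} {ξ : F} {n : ℕ} {A : Type*} [Ring A] [Algebra F A]

theorem ratEnd_eq {D D' : RatEnd F n A}
    (hD : ∀ i, ∃ g, (D - D') * opMul A (var F i) = opMul A g * (D - D'))
    (h1 : ∀ a, D (tm 1 a) = D' (tm 1 a)) : D = D' :=
  sub_eq_zero.1 (ratEnd_eq_zero hD fun a => by rw [LinearMap.sub_apply, h1, sub_self])

section Coefficients

variable (ξ)

theorem psi_mul_sub (i : Fin (n - 1)) :
    psi ξ i * (var F (lo i) - var F (hi i)) = -(ξ • var F (hi i)) := by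
  have h := var_sub_ne_zero F (lo_ne_hi i).symm
  rw [psi, smul_mul_assoc, ← smul_neg, ← neg_sub (var F (hi i)), mul_neg, div_mul_cancel₀ _ h]

theorem psi_mul_inv_sub (i : Fin (n - 1)) :
    psi ξ i * ((var F (lo i))⁻¹ - (var F (hi i))⁻¹) = ξ • (var F (lo i))⁻¹ := by
  have h := var_sub_ne_zero F (lo_ne_hi i).symm
  have h1 := var_ne_zero F (lo i)
  have h2 := var_ne_zero F (hi i)
  rw [psi, smul_mul_assoc, inv_sub_inv h1 h2]
  congr 1
  field_simp

theorem phi_mul_sub (i : Fin (n - 1)) :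
    phi ξ i * (var F (lo i) - (var F (hi i))⁻¹) = ξ • (var F (hi i))⁻¹ := by
  have h := var_mul_sub_one_ne_zero F (lo_ne_hi i)
  have h2 := var_ne_zero F (hi i)
  rw [phi, smul_mul_assoc]
  congr 1
  field_simp

theorem phi_mul_sub' (i : Fin (n - 1)) :
    phi ξ i * (var F (hi i) - (var F (lo i))⁻¹) = ξ • (var F (lo i))⁻¹ := by
  have h := var_mul_sub_one_ne_zero F (lo_ne_hi i)
  have h2 := var_ne_zero F (lo i)
  rw [phi, smul_mul_assoc]
  congr 1
  field_simp

end Coefficients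

theorem flipAut_flipAut_lo (i : Fin (n - 1)) :
    flipAut F (lo i) (flipAut F (hi i) (var F (lo i))) = (var F (lo i))⁻¹ := by
  rw [flipAut_var_of_ne F (lo_ne_hi i).symm, flipAut_var_self]

theorem flipAut_flipAut_hi (i : Fin (n - 1)) :
    flipAut F (lo i) (flipAut F (hi i) (var F (hi i))) = (var F (hi i))⁻¹ := by
  rw [flipAut_var_self, map_inv₀, flipAut_var_of_ne F (lo_ne_hi i)]

namespace FinData

variable (D : FinData F ξ n A)

theorem opC_one_tm (i : Fin n) (a : A) : D.opC i (tm 1 a) = tm 1 (D.C i * a) := by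
  rw [opC_tm, map_one]

theorem opT_one_tm (i : Fin (n - 1)) (a : A) : D.opT i (tm 1 a) = tm 1 (D.T i * a) := by
  simp [opT_tm, zero_tm]

/-- The operator of `C_i C_{i+1}`. -/
noncomputable def opCC (i : Fin (n - 1)) : RatEnd F n A := D.opC (lo i) * D.opC (hi i)

theorem opCC_mul_opMul (i : Fin (n - 1)) (g : RatFn F n) :
    D.opCC i * opMul A g = opMul A (flipAut F (lo i) (flipAut F (hi i) g)) * D.opCC i := by
  rw [opCC, mul_assoc, opC_mul_opMul, ← mul_assoc, opC_mul_opMul, mul_assoc]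

theorem opCC_sq (i : Fin (n - 1)) : D.opCC i * D.opCC i = -1 :=
  cliffordPair_sq (D.opC_anti (lo_ne_hi i)) (D.opC_sq _) (D.opC_sq _)

theorem opT_mul_opCC (i : Fin (n - 1)) :
    D.opT i * D.opCC i = -(D.opCC i * D.opT i) + ξ • D.opCC i + ξ • 1 :=
  hecke_mul_cliffordPair (D.opT_mul_opC_lo i) (D.opT_mul_opC_hi i) (D.opC_anti (lo_ne_hi i))
    (D.opC_sq _)

theorem opT_mul_var_lo (i : Fin (n - 1)) : D.opT i * opMul A (var F (lo i)) =
    opMul A (var F (hi i)) * D.opT i - ξ • opMul A (var F (hi i))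
      - ξ • (opMul A (var F (lo i))⁻¹ * D.opCC i) := by
  have h : phi ξ i * ((var F (lo i))⁻¹ - var F (hi i)) = -(ξ • (var F (lo i))⁻¹) := by
    rw [← phi_mul_sub', ← mul_neg, neg_sub]
  rw [opT_mul_opMul, swapAut_var, s_lo, flipAut_flipAut_lo, psi_mul_sub, h, map_neg, map_neg,
    map_smul, map_smul, ← opCC, ← sub_eq_add_neg, ← neg_one_smul F (ξ • opMul A (var F (lo i))⁻¹),
    smul_mul_assoc, smul_mul_assoc, neg_one_smul, ← sub_eq_add_neg]

theorem opT_mul_var_hi (i : Fin (n - 1)) : D.opT i * opMul A (var F (hi i)) =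
    opMul A (var F (lo i)) * D.opT i + ξ • opMul A (var F (hi i))
      - ξ • (opMul A (var F (hi i))⁻¹ * D.opCC i) := by
  have h : phi ξ i * ((var F (hi i))⁻¹ - var F (lo i)) = -(ξ • (var F (hi i))⁻¹) := by
    rw [← phi_mul_sub, ← mul_neg, neg_sub]
  have h' : psi ξ i * (var F (hi i) - var F (lo i)) = ξ • var F (hi i) := by
    rw [← neg_sub, mul_neg, psi_mul_sub, neg_neg]
  rw [opT_mul_opMul, swapAut_var, s_hi, flipAut_flipAut_hi, h', h, map_neg,
    map_smul, map_smul, ← opCC, ← neg_one_smul F (ξ • opMul A (var F (hi i))⁻¹),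
    smul_mul_assoc, smul_mul_assoc, neg_one_smul, ← sub_eq_add_neg]

theorem opT_mul_inv_lo (i : Fin (n - 1)) : D.opT i * opMul A (var F (lo i))⁻¹ =
    opMul A (var F (hi i))⁻¹ * D.opT i + ξ • opMul A (var F (lo i))⁻¹
      + ξ • (opMul A (var F (hi i))⁻¹ * D.opCC i) := by
  rw [opT_mul_opMul, map_inv₀ (swapAut F i), map_inv₀ (flipAut F (hi i)), map_inv₀ (flipAut F (lo i)), swapAut_var, s_lo, flipAut_flipAut_lo, inv_inv,
    psi_mul_inv_sub, phi_mul_sub, map_smul, map_smul, ← opCC, smul_mul_assoc]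

theorem opT_mul_inv_hi (i : Fin (n - 1)) : D.opT i * opMul A (var F (hi i))⁻¹ =
    opMul A (var F (lo i))⁻¹ * D.opT i - ξ • opMul A (var F (lo i))⁻¹
      + ξ • (opMul A (var F (lo i))⁻¹ * D.opCC i) := by
  have h : psi ξ i * ((var F (hi i))⁻¹ - (var F (lo i))⁻¹) = -(ξ • (var F (lo i))⁻¹) := by
    rw [← neg_sub, mul_neg, psi_mul_inv_sub]
  rw [opT_mul_opMul, map_inv₀ (swapAut F i), map_inv₀ (flipAut F (hi i)), map_inv₀ (flipAut F (lo i)), swapAut_var, s_hi, flipAut_flipAut_hi, inv_inv,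
    h, phi_mul_sub', map_neg, map_smul, ← opCC, smul_mul_assoc, ← sub_eq_add_neg]

theorem opT_mul_var_of_ne {i : Fin (n - 1)} {j : Fin n} (h1 : j ≠ lo i) (h2 : j ≠ hi i) :
    D.opT i * opMul A (var F j) = opMul A (var F j) * D.opT i := by
  rw [opT_mul_opMul, swapAut_var, s_of_ne h1 h2, flipAut_var_of_ne F h2.symm,
    flipAut_var_of_ne F h1.symm]
  simp only [sub_self, mul_zero, map_zero, zero_mul, add_zero]

theorem opT_mul_inv_of_ne {i : Fin (n - 1)} {j : Fin n} (h1 : j ≠ lo i) (h2 : j ≠ hi i) :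
    D.opT i * opMul A (var F j)⁻¹ = opMul A (var F j)⁻¹ * D.opT i := by
  rw [opT_mul_opMul, map_inv₀ (swapAut F i), map_inv₀ (flipAut F (hi i)), map_inv₀ (flipAut F (lo i)), swapAut_var, s_of_ne h1 h2,
    flipAut_var_of_ne F h2.symm, flipAut_var_of_ne F h1.symm]
  simp only [sub_self, mul_zero, map_zero, zero_mul, add_zero]

theorem opT_sq (i : Fin (n - 1)) : D.opT i * D.opT i = ξ • D.opT i + 1 := by
  refine ratEnd_eq (fun j => ?_) fun a => ?_
  · refine ⟨var F j, ?_⟩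
    by_cases h1 : j = lo i
    · subst h1
      exact quad_intertwine_lo (D.opT_mul_var_lo i) (D.opT_mul_var_hi i) (D.opT_mul_inv_lo i)
        (D.opT_mul_opCC i) (D.opCC_sq i)
    by_cases h2 : j = hi i
    · subst h2
      exact quad_intertwine_hi (D.opT_mul_var_lo i) (D.opT_mul_var_hi i) (D.opT_mul_inv_hi i)
        (D.opT_mul_opCC i) (D.opCC_sq i)
    have h := D.opT_mul_var_of_ne h1 h2
    rw [sub_mul, mul_sub, mul_assoc, h, ← mul_assoc, h, mul_assoc, add_mul, mul_add,
      smul_mul_assoc, h, mul_smul_comm, one_mul, mul_one]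
  · rw [Module.End.mul_apply, LinearMap.add_apply, LinearMap.smul_apply, opT_one_tm,
      opT_one_tm, ← mul_assoc, D.T_sq, add_mul, tm_add, smul_mul_assoc,
      tm_smul, one_mul, Module.End.one_apply]

theorem opT_mul_opCC_of_far {i j : Fin (n - 1)} (h1 : lo j ≠ lo i) (h2 : lo j ≠ hi i)
    (h3 : hi j ≠ lo i) (h4 : hi j ≠ hi i) : D.opT i * D.opCC j = D.opCC j * D.opT i := by
  rw [opCC, ← mul_assoc, D.opT_mul_opC_of_ne h1 h2, mul_assoc, D.opT_mul_opC_of_ne h3 h4,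
    mul_assoc]

theorem opT_far {i j : Fin (n - 1)} (h : (i : ℕ) + 1 < (j : ℕ)) :
    D.opT i * D.opT j = D.opT j * D.opT i := by
  have h1 : lo j ≠ lo i := by simp only [lo, ne_eq, Fin.mk.injEq]; omega
  have h2 : lo j ≠ hi i := by simp only [lo, hi, ne_eq, Fin.mk.injEq]; omega
  have h3 : hi j ≠ lo i := by simp only [lo, hi, ne_eq, Fin.mk.injEq]; omega
  have h4 : hi j ≠ hi i := by simp only [hi, ne_eq, Fin.mk.injEq]; omega
  have hC : ∀ {i j : Fin (n - 1)} (_ : lo j ≠ lo i) (_ : lo j ≠ hi i) (_ : hi j ≠ lo i)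
      (_ : hi j ≠ hi i),
      (D.opT i * (-ξ • opMul A (var F (hi j)) - ξ • (opMul A (var F (lo j))⁻¹ * D.opCC j)) =
        (-ξ • opMul A (var F (hi j)) - ξ • (opMul A (var F (lo j))⁻¹ * D.opCC j)) * D.opT i) ∧
      (D.opT i * (ξ • opMul A (var F (hi j)) - ξ • (opMul A (var F (hi j))⁻¹ * D.opCC j)) =
        (ξ • opMul A (var F (hi j)) - ξ • (opMul A (var F (hi j))⁻¹ * D.opCC j)) * D.opT i) := by
    intro i j h1 h2 h3 h4
    constructor
    · rw [mul_sub, sub_mul, mul_smul_comm, smul_mul_assoc, D.opT_mul_var_of_ne h3 h4,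
        mul_smul_comm, smul_mul_assoc, ← mul_assoc, D.opT_mul_inv_of_ne h1 h2, mul_assoc,
        D.opT_mul_opCC_of_far h1 h2 h3 h4, mul_assoc]
    · rw [mul_sub, sub_mul, mul_smul_comm, smul_mul_assoc, D.opT_mul_var_of_ne h3 h4,
        mul_smul_comm, smul_mul_assoc, ← mul_assoc, D.opT_mul_inv_of_ne h3 h4, mul_assoc,
        D.opT_mul_opCC_of_far h1 h2 h3 h4, mul_assoc]
  have hlo : ∀ i, D.opT i * opMul A (var F (lo i)) = opMul A (var F (hi i)) * D.opT i +
      (-ξ • opMul A (var F (hi i)) - ξ • (opMul A (var F (lo i))⁻¹ * D.opCC i)) := fun i => by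
    rw [D.opT_mul_var_lo, neg_smul]; abel
  have hhi : ∀ i, D.opT i * opMul A (var F (hi i)) = opMul A (var F (lo i)) * D.opT i +
      (ξ • opMul A (var F (hi i)) - ξ • (opMul A (var F (hi i))⁻¹ * D.opCC i)) := fun i => by
    rw [D.opT_mul_var_hi]; abel
  refine ratEnd_eq (fun l => ?_) fun a => ?_
  · by_cases hl1 : l = lo i
    · subst hl1
      exact ⟨_, commutator_intertwine_left (hlo i) (D.opT_mul_var_of_ne h1.symm h3.symm)
        (D.opT_mul_var_of_ne h2.symm h4.symm) (hC h1.symm h3.symm h2.symm h4.symm).1⟩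
    by_cases hl2 : l = hi i
    · subst hl2
      exact ⟨_, commutator_intertwine_left (hhi i) (D.opT_mul_var_of_ne h2.symm h4.symm)
        (D.opT_mul_var_of_ne h1.symm h3.symm) (hC h1.symm h3.symm h2.symm h4.symm).2⟩
    have hl := D.opT_mul_var_of_ne hl1 hl2
    by_cases hl3 : l = lo j
    · subst hl3
      exact ⟨_, commutator_intertwine_right (hlo j) hl (D.opT_mul_var_of_ne h3 h4)
        (hC h1 h2 h3 h4).1⟩
    by_cases hl4 : l = hi j
    · subst hl4
      exact ⟨_, commutator_intertwine_right (hhi j) hl (D.opT_mul_var_of_ne h1 h2)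
        (hC h1 h2 h3 h4).2⟩
    have hl' := D.opT_mul_var_of_ne hl3 hl4
    exact ⟨_, commutator_intertwine_left (P := 0) (by rw [hl, add_zero]) hl' hl' (by simp)⟩
  · simp only [Module.End.mul_apply, opT_one_tm, ← mul_assoc, D.T_far h]

theorem opCC_mul_var_lo (i : Fin (n - 1)) : D.opCC i * opMul A (var F (lo i)) =
    opMul A (var F (lo i))⁻¹ * D.opCC i := by
  rw [opCC_mul_opMul, flipAut_flipAut_lo]

theorem opCC_mul_var_hi (i : Fin (n - 1)) : D.opCC i * opMul A (var F (hi i)) =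
    opMul A (var F (hi i))⁻¹ * D.opCC i := by
  rw [opCC_mul_opMul, flipAut_flipAut_hi]

theorem opTstar_mul_var_of_ne {i : Fin (n - 1)} {j : Fin n} (h1 : j ≠ lo i) (h2 : j ≠ hi i) :
    (D.opT i + ξ • D.opCC i) * opMul A (var F j) =
      opMul A (var F j) * (D.opT i + ξ • D.opCC i) := by
  rw [add_mul, D.opT_mul_var_of_ne h1 h2, smul_mul_assoc, opCC_mul_opMul,
    flipAut_var_of_ne F h2.symm, flipAut_var_of_ne F h1.symm, mul_add, mul_smul_comm]

theorem opT_braid {i j : Fin (n - 1)} (h : (j : ℕ) = (i : ℕ) + 1) :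
    D.opT i * D.opT j * D.opT i = D.opT j * D.opT i * D.opT j := by
  have h0 : lo j = hi i := by simp only [lo, hi, Fin.mk.injEq]; omega
  have h1 : lo i ≠ lo j := by simp only [lo, ne_eq, Fin.mk.injEq]; omega
  have h2 : lo i ≠ hi j := by simp only [lo, hi, ne_eq, Fin.mk.injEq]; omega
  have h3 : hi j ≠ hi i := by simp only [hi, ne_eq, Fin.mk.injEq]; omega
  have hlj := D.opT_mul_var_lo j
  have hhj := D.opT_mul_var_hi j
  have hel := D.opCC_mul_var_lo j
  have hCj := D.opT_mul_opC_lo j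
  have hCj' := D.opT_mul_opC_hi j
  have hc : D.opCC j = D.opC (hi i) * D.opC (hi j) := by rw [opCC, h0]
  rw [h0] at hlj hhj hCj hCj' hel
  have R3 : RankThree ξ (D.opT i) (D.opT j) (D.opC (lo i)) (D.opC (hi i)) (D.opC (hi j)) :=
    { U_sq := D.opT_sq i
      V_sq := D.opT_sq j
      U_C₁ := D.opT_mul_opC_lo i
      U_C₂ := D.opT_mul_opC_hi i
      U_C₃ := D.opT_mul_opC_of_ne h2.symm h3
      V_C₁ := D.opT_mul_opC_of_ne h1 h2
      V_C₂ := hCj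
      V_C₃ := hCj'
      C₁_sq := D.opC_sq _
      C₂_sq := D.opC_sq _
      C₃_sq := D.opC_sq _
      C₂_C₁ := D.opC_anti (lo_ne_hi i).symm
      C₃_C₁ := D.opC_anti h2.symm
      C₃_C₂ := D.opC_anti h3 }
  have hVX := D.opTstar_mul_var_of_ne h1 h2
  have hUX := D.opTstar_mul_var_of_ne h2.symm h3
  have hU := star_mul_lo_of_mul_lo (D.opT_mul_var_lo i) (D.opCC_mul_var_lo i)
  have hU' := star_mul_hi_of_mul_hi (D.opT_mul_var_hi i) (D.opCC_mul_var_hi i)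
  have hV := star_mul_lo_of_mul_lo hlj hel
  have hV' := star_mul_hi_of_mul_hi hhj (D.opCC_mul_var_hi j)
  rw [hc] at hVX hV hV'
  rw [opCC] at hUX hU hU'
  refine ratEnd_eq (fun l => ?_) fun a => ?_
  · by_cases hl1 : l = lo i
    · subst hl1
      exact ⟨_, R3.braid_intertwine_one hVX hUX hU hV⟩
    by_cases hl2 : l = hi i
    · subst hl2
      exact ⟨_, R3.braid_intertwine_two hVX hUX hU hU' hV hV'⟩
    by_cases hl3 : l = hi j
    · subst hl3
      exact ⟨_, R3.braid_intertwine_three hVX hUX hU' hV hV'⟩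
    have hi' : Commute (D.opT i) (opMul A (var F l)) := D.opT_mul_var_of_ne hl1 hl2
    have hj' : Commute (D.opT j) (opMul A (var F l)) :=
      D.opT_mul_var_of_ne (by rwa [h0]) hl3
    exact ⟨_, (((hi'.mul_left hj').mul_left hi').sub_left ((hj'.mul_left hi').mul_left hj')).eq⟩
  · simp only [Module.End.mul_apply, opT_one_tm, ← mul_assoc, D.T_braid h]

/-- The operators on `A`-valued rational functions satisfy the affine relations. -/
noncomputable def ratData : AffData F ξ n (RatEnd F n A) where
  C := D.opC
  T := D.opT
  X i := opMul A (var F i)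
  Xinv i := opMul A (var F i)⁻¹
  C_sq := D.opC_sq
  C_anti := D.opC_anti
  T_sq := D.opT_sq
  T_braid := D.opT_braid
  T_far := D.opT_far
  T_mul_C_lo := D.opT_mul_opC_lo
  T_mul_C_of_ne := D.opT_mul_opC_of_ne
  X_mul_Xinv i := by rw [← map_mul, mul_inv_cancel₀ (var_ne_zero F i), map_one]
  Xinv_mul_X i := by rw [← map_mul, inv_mul_cancel₀ (var_ne_zero F i), map_one]
  X_commute i j := (Commute.all (var F i) (var F j)).map (opMul A)
  C_mul_X i := by rw [opC_mul_opMul, flipAut_var_self]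
  C_mul_X_of_ne h := by rw [opC_mul_opMul, flipAut_var_of_ne F h]
  T_mul_X_of_ne := D.opT_mul_var_of_ne
  T_cross i := by
    have h := star_mul_lo_of_mul_lo (D.opT_mul_var_lo i) (D.opCC_mul_var_lo i)
    rw [← opCC, h, mul_assoc, quad_sub_mul (D.opT_sq i), mul_one]

end FinData

end Operators

section Monomials

variable {F} {ξ : F} {n : ℕ} {A : Type*} [Ring A] [Algebra F A]

theorem lattice_induction {P : (Fin n → ℤ) → Prop} (h0 : P 0)
    (hadd : ∀ i α, P α → P (Pi.single i 1 + α)) (hsub : ∀ i α, P α → P (-Pi.single i 1 + α))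
    (α : Fin n → ℤ) : P α := by
  have h1 : ∀ i (a : ℤ) β, P β → P (Pi.single i a + β) := by
    intro i a β hβ
    induction a using Int.induction_on with
    | zero => rwa [Pi.single_zero, zero_add]
    | succ m ih =>
      rw [add_comm (m : ℤ), Pi.single_add, add_assoc]
      exact hadd i _ ih
    | pred m ih =>
      rw [sub_eq_neg_add, Pi.single_add, add_assoc, Pi.single_neg]
      exact hsub i _ ih
  have h2 : ∀ t : Finset (Fin n), P (∑ i ∈ t, Pi.single i (α i)) := by
    intro t
    induction t using Finset.induction_on with
    | empty => simpa using h0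
    | insert i t hi ih =>
      rw [Finset.sum_insert hi]
      exact h1 i _ _ ih
  have h3 := h2 Finset.univ
  rwa [Finset.univ_sum_single] at h3

theorem list_prod_semiconjBy {M ι : Type*} [Monoid M] {a : M} {x y : ι → M}
    (h : ∀ i, SemiconjBy a (x i) (y i)) (l : List ι) :
    SemiconjBy a (l.map x).prod (l.map y).prod := by
  induction l with
  | nil => simp
  | cons i l ih => simpa using (h i).mul_right ih

theorem list_prod_map_mul {M ι : Type*} [Monoid M] {x y : ι → M}
    (h : ∀ i j, Commute (y i) (x j)) (l : List ι) :
    (l.map fun i => x i * y i).prod = (l.map x).prod * (l.map y).prod := by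
  induction l with
  | nil => simp
  | cons i l ih =>
    have h' : y i * (l.map x).prod = (l.map x).prod * y i :=
      list_prod_semiconjBy (fun j => h i j) l
    simp only [List.map_cons, List.prod_cons, ih, mul_assoc]
    rw [← mul_assoc (y i), h', mul_assoc]

namespace AffData

variable (D : AffData F ξ n A)

/-- The monomial `X^α`. -/
def mon (α : Fin n → ℤ) : A :=
  ((List.finRange n).map fun i => ((D.unit i ^ α i : Aˣ) : A)).prod

theorem mon_zero : D.mon 0 = 1 := by
  simp [mon]

theorem mon_add (α β : Fin n → ℤ) : D.mon (α + β) = D.mon α * D.mon β := by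
  rw [mon, mon, mon, ← list_prod_map_mul]
  · simp only [Pi.add_apply, zpow_add, Units.val_mul]
  · intro i j
    exact congrArg Units.val (((D.unit_commute i j).zpow_zpow _ _).eq)

theorem mon_single (i : Fin n) (a : ℤ) : D.mon (Pi.single i a) = ((D.unit i ^ a : Aˣ) : A) := by
  rw [mon, List.prod_map_eq_pow_single i,
    List.count_eq_one_of_mem (List.nodup_finRange n) (List.mem_finRange i), pow_one,
    Pi.single_eq_same]
  intro j hj _
  rw [Pi.single_eq_of_ne hj, zpow_zero, Units.val_one]

theorem mon_single_one (i : Fin n) : D.mon (Pi.single i 1) = D.X i := by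
  rw [mon_single, zpow_one]; rfl

theorem mon_neg_single_one (i : Fin n) : D.mon (-Pi.single i 1) = D.Xinv i := by
  rw [← Pi.single_neg, mon_single, zpow_neg_one]; rfl

theorem mon_comm (α β : Fin n → ℤ) : D.mon α * D.mon β = D.mon β * D.mon α := by
  rw [← mon_add, add_comm, mon_add]

theorem C_mul_mon (i : Fin n) (α : Fin n → ℤ) :
    D.C i * D.mon α = D.mon (flipLattice i α) * D.C i := by
  refine list_prod_semiconjBy (fun j => ?_) _
  rw [flipLattice_apply]
  split_ifs with h
  · subst h
    have h1 : SemiconjBy (D.C j) (D.unit j : A) ((D.unit j)⁻¹ : Aˣ) := D.C_mul_X j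
    have h2 := h1.units_zpow_right (α j)
    rwa [inv_zpow'] at h2
  · have h1 : SemiconjBy (D.C i) (D.unit j : A) (D.unit j : A) := D.C_mul_X_of_ne (Ne.symm h)
    exact h1.units_zpow_right (α j)

theorem T_mul_mon {i : Fin (n - 1)} {α : Fin n → ℤ} (h1 : α (lo i) = 0) (h2 : α (hi i) = 0) :
    D.T i * D.mon α = D.mon α * D.T i := by
  refine list_prod_semiconjBy (fun j => ?_) _
  by_cases hj1 : j = lo i
  · rw [hj1, h1, zpow_zero]; exact SemiconjBy.one_right _
  by_cases hj2 : j = hi i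
  · rw [hj2, h2, zpow_zero]; exact SemiconjBy.one_right _
  have h : SemiconjBy (D.T i) (D.unit j : A) (D.unit j : A) := D.T_mul_X_of_ne hj1 hj2
  exact h.units_zpow_right (α j)

theorem CC_mul_mon (i : Fin (n - 1)) (α : Fin n → ℤ) :
    D.CC i * D.mon α = D.mon (flipLattice (lo i) (flipLattice (hi i) α)) * D.CC i := by
  rw [FinData.CC, mul_assoc, C_mul_mon, ← mul_assoc, C_mul_mon, mul_assoc]

theorem Tstar_mul_mon {i : Fin (n - 1)} {α : Fin n → ℤ} (h1 : α (lo i) = 0) (h2 : α (hi i) = 0) :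
    D.Tstar i * D.mon α = D.mon α * D.Tstar i := by
  have h : flipLattice (lo i) (flipLattice (hi i) α) = α := by
    ext j
    simp only [flipLattice_apply]
    split_ifs with h3 h4 h4
    · simp
    · rw [h3, h1, neg_zero]
    · rw [h4, h2, neg_zero]
    · rfl
  rw [FinData.Tstar, add_mul, smul_mul_assoc, D.T_mul_mon h1 h2, CC_mul_mon, h, mul_add,
    mul_smul_comm]

/-- The span of the elements `X^β h` with `β ∈ S` and `h` in the finite subalgebra. -/
def XS (S : Set (Fin n → ℤ)) : Submodule F A :=
  Submodule.span F {x | ∃ β ∈ S, ∃ h ∈ D.fin, x = D.mon β * h}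

variable {D} {S S' : Set (Fin n → ℤ)} {x h : A}

theorem mon_mul_mem_XS {β : Fin n → ℤ} (hβ : β ∈ S) (hh : h ∈ D.fin) : D.mon β * h ∈ D.XS S :=
  Submodule.subset_span ⟨β, hβ, h, hh, rfl⟩

theorem mon_mem_XS {β : Fin n → ℤ} (hβ : β ∈ S) : D.mon β ∈ D.XS S := by
  have := mon_mul_mem_XS (D := D) hβ (one_mem D.fin)
  rwa [mul_one] at this

theorem fin_le_XS (hh : h ∈ D.fin) (h0 : 0 ∈ S) : h ∈ D.XS S := by
  have := mon_mul_mem_XS (D := D) h0 hh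
  rwa [mon_zero, one_mul] at this

theorem map_mem_of_mem_XS {M : Type*} [AddCommGroup M] [Module F M] (f : A →ₗ[F] M)
    {N : Submodule F M} (hf : ∀ β ∈ S, ∀ h ∈ D.fin, f (D.mon β * h) ∈ N) (hx : x ∈ D.XS S) :
    f x ∈ N := by
  have : D.XS S ≤ N.comap f := by
    refine Submodule.span_le.2 ?_
    rintro _ ⟨β, hβ, h, hh, rfl⟩
    exact hf β hβ h hh
  exact this hx

theorem XS_mono (hS : S ⊆ S') (hx : x ∈ D.XS S) : x ∈ D.XS S' :=
  map_mem_of_mem_XS LinearMap.id (fun _ hβ _ hh => mon_mul_mem_XS (hS hβ) hh) hx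

theorem mul_mem_XS (hx : x ∈ D.XS S) (hh : h ∈ D.fin) : x * h ∈ D.XS S :=
  map_mem_of_mem_XS (LinearMap.mulRight F h) (fun β hβ k hk => by
    rw [LinearMap.mulRight_apply, mul_assoc]
    exact mon_mul_mem_XS hβ (mul_mem hk hh)) hx

theorem mul_mem_XS_of_mon {y : A} (hy : ∀ β ∈ S, y * D.mon β ∈ D.XS S') (hx : x ∈ D.XS S) :
    y * x ∈ D.XS S' :=
  map_mem_of_mem_XS (LinearMap.mulLeft F y) (fun β hβ k hk => by
    rw [LinearMap.mulLeft_apply, ← mul_assoc]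
    exact mul_mem_XS (hy β hβ) hk) hx

theorem mon_mul_XS {α : Fin n → ℤ} (hS : ∀ β ∈ S, α + β ∈ S') (hx : x ∈ D.XS S) :
    D.mon α * x ∈ D.XS S' :=
  mul_mem_XS_of_mon (fun β hβ => by rw [← mon_add]; exact mon_mem_XS (hS β hβ)) hx

theorem X_mul_XS {i : Fin n} (hS : ∀ β ∈ S, Pi.single i 1 + β ∈ S') (hx : x ∈ D.XS S) :
    D.X i * x ∈ D.XS S' := by
  rw [← mon_single_one]; exact mon_mul_XS hS hx

theorem Xinv_mul_XS {i : Fin n} (hS : ∀ β ∈ S, -Pi.single i 1 + β ∈ S') (hx : x ∈ D.XS S) :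
    D.Xinv i * x ∈ D.XS S' := by
  rw [← mon_neg_single_one]; exact mon_mul_XS hS hx

theorem C_mul_XS {i : Fin n} (hS : ∀ β ∈ S, flipLattice i β ∈ S') (hx : x ∈ D.XS S) :
    D.C i * x ∈ D.XS S' :=
  mul_mem_XS_of_mon (fun β hβ => by
    rw [C_mul_mon]; exact mon_mul_mem_XS (hS β hβ) (D.C_mem i)) hx

/-- The exponents that agree with `β` away from `i` and `i + 1`. -/
def agree (i : Fin (n - 1)) (β : Fin n → ℤ) : Set (Fin n → ℤ) :=
  {γ | ∀ j, j ≠ lo i → j ≠ hi i → γ j = β j}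

theorem CC_mul_XS_agree {i : Fin (n - 1)} {β : Fin n → ℤ} (hx : x ∈ D.XS (agree i β)) :
    D.CC i * x ∈ D.XS (agree i β) := by
  rw [FinData.CC, mul_assoc]
  refine C_mul_XS (S := agree i β) (fun γ hγ j h1 h2 => ?_)
    (C_mul_XS (fun γ hγ j h1 h2 => ?_) hx)
  · rw [flipLattice_apply, if_neg h1, hγ j h1 h2]
  · rw [flipLattice_apply, if_neg h2, hγ j h1 h2]

theorem X_mul_XS_agree {i : Fin (n - 1)} {l : Fin n} (hl : l = lo i ∨ l = hi i)
    {β : Fin n → ℤ} (hx : x ∈ D.XS (agree i β)) : D.X l * x ∈ D.XS (agree i β) := by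
  refine X_mul_XS (fun γ hγ j h1 h2 => ?_) hx
  have hj : j ≠ l := by rintro rfl; tauto
  rw [Pi.add_apply, Pi.single_eq_of_ne hj, zero_add, hγ j h1 h2]

theorem Xinv_mul_XS_agree {i : Fin (n - 1)} {l : Fin n} (hl : l = lo i ∨ l = hi i)
    {β : Fin n → ℤ} (hx : x ∈ D.XS (agree i β)) : D.Xinv l * x ∈ D.XS (agree i β) := by
  refine Xinv_mul_XS (fun γ hγ j h1 h2 => ?_) hx
  have hj : j ≠ l := by rintro rfl; tauto
  rw [Pi.add_apply, Pi.neg_apply, Pi.single_eq_of_ne hj, neg_zero, zero_add, hγ j h1 h2]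

theorem agree_add_left {i : Fin (n - 1)} {α : Fin n → ℤ} (hα : α ∈ agree i 0) (β : Fin n → ℤ) :
    agree i (α + β) = agree i β := by
  ext γ
  refine forall_congr' fun j => forall_congr' fun h1 => forall_congr' fun h2 => ?_
  rw [Pi.add_apply, hα j h1 h2, Pi.zero_apply, zero_add]

theorem T_mul_mon_mem (i : Fin (n - 1)) (β : Fin n → ℤ) :
    D.T i * D.mon β ∈ D.XS (agree i β) := by
  induction β using lattice_induction with
  | h0 =>
    rw [mon_zero, mul_one]
    exact fin_le_XS (D.T_mem i) fun j _ _ => rfl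
  | hadd l β ih =>
    have hm : D.mon β ∈ D.XS (agree i β) := mon_mem_XS fun j _ _ => rfl
    have hc := CC_mul_XS_agree hm
    have ha : l = lo i ∨ l = hi i → agree i (Pi.single l 1 + β) = agree i β := fun hl =>
      agree_add_left (fun j h1 h2 => by
        rw [Pi.single_eq_of_ne, Pi.zero_apply]; rintro rfl; tauto) β
    rw [mon_add, mon_single_one, ← mul_assoc]
    by_cases h1 : l = lo i
    · rw [ha (.inl h1), h1, T_mul_X_lo, sub_mul, sub_mul, smul_mul_assoc, smul_mul_assoc,
        mul_assoc, mul_assoc]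
      exact sub_mem (sub_mem (X_mul_XS_agree (.inr rfl) ih)
        (Submodule.smul_mem _ _ (X_mul_XS_agree (.inr rfl) hm)))
        (Submodule.smul_mem _ _ (Xinv_mul_XS_agree (.inl rfl) hc))
    by_cases h2 : l = hi i
    · rw [ha (.inr h2), h2, T_mul_X_hi, sub_mul, add_mul, smul_mul_assoc, smul_mul_assoc,
        mul_assoc, mul_assoc]
      exact sub_mem (add_mem (X_mul_XS_agree (.inl rfl) ih)
        (Submodule.smul_mem _ _ (X_mul_XS_agree (.inr rfl) hm)))
        (Submodule.smul_mem _ _ (Xinv_mul_XS_agree (.inr rfl) hc))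
    rw [D.T_mul_X_of_ne h1 h2, mul_assoc]
    exact X_mul_XS (fun γ hγ j h3 h4 => by rw [Pi.add_apply, hγ j h3 h4, Pi.add_apply]) ih
  | hsub l β ih =>
    have hm : D.mon β ∈ D.XS (agree i β) := mon_mem_XS fun j _ _ => rfl
    have hc := CC_mul_XS_agree hm
    have ha : l = lo i ∨ l = hi i → agree i (-Pi.single l 1 + β) = agree i β := fun hl =>
      agree_add_left (fun j h1 h2 => by
        rw [Pi.neg_apply, Pi.single_eq_of_ne, neg_zero, Pi.zero_apply]; rintro rfl; tauto) β
    rw [mon_add, mon_neg_single_one, ← mul_assoc]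
    by_cases h1 : l = lo i
    · rw [ha (.inl h1), h1, T_mul_Xinv_lo, add_mul, add_mul, smul_mul_assoc, smul_mul_assoc,
        mul_assoc, mul_assoc]
      exact add_mem (add_mem (Xinv_mul_XS_agree (.inr rfl) ih)
        (Submodule.smul_mem _ _ (Xinv_mul_XS_agree (.inl rfl) hm)))
        (Submodule.smul_mem _ _ (Xinv_mul_XS_agree (.inr rfl) hc))
    by_cases h2 : l = hi i
    · rw [ha (.inr h2), h2, T_mul_Xinv_hi, add_mul, sub_mul, smul_mul_assoc, smul_mul_assoc,
        mul_assoc, mul_assoc]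
      exact add_mem (sub_mem (Xinv_mul_XS_agree (.inl rfl) ih)
        (Submodule.smul_mem _ _ (Xinv_mul_XS_agree (.inl rfl) hm)))
        (Submodule.smul_mem _ _ (Xinv_mul_XS_agree (.inl rfl) hc))
    rw [D.T_mul_Xinv_of_ne h1 h2, mul_assoc]
    exact Xinv_mul_XS (fun γ hγ j h3 h4 => by rw [Pi.add_apply, hγ j h3 h4, Pi.add_apply]) ih

theorem T_mul_XS {i : Fin (n - 1)} (hS : ∀ β ∈ S, agree i β ⊆ S') (hx : x ∈ D.XS S) :
    D.T i * x ∈ D.XS S' :=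
  mul_mem_XS_of_mon (fun β hβ => XS_mono (hS β hβ) (T_mul_mon_mem i β)) hx

end AffData

end Monomials

section Standard

variable {F} (q : F) (n : ℕ)

theorem XS_univ : (affData q n).XS Set.univ = ⊤ := by
  have key : ∀ w : FA F n, ∀ x ∈ (affData q n).XS Set.univ,
      RingQuot.mkAlgHom F (Rel F q n) w * x ∈ (affData q n).XS Set.univ := by
    intro w
    induction w using FreeAlgebra.induction with
    | grade0 c =>
      intro x hx
      rw [AlgHom.commutes, ← Algebra.smul_def]
      exact Submodule.smul_mem _ c hx
    | grade1 g =>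
      intro x hx
      cases g with
      | X i => exact AffData.X_mul_XS (fun _ _ => trivial) hx
      | Xinv i => exact AffData.Xinv_mul_XS (fun _ _ => trivial) hx
      | C i => exact AffData.C_mul_XS (fun _ _ => trivial) hx
      | T i => exact AffData.T_mul_XS (fun _ _ _ _ => trivial) hx
    | mul a b ha hb =>
      intro x hx
      rw [map_mul, mul_assoc]
      exact ha _ (hb _ hx)
    | add a b ha hb =>
      intro x hx
      rw [map_add, add_mul]
      exact add_mem (ha _ hx) (hb _ hx)
  refine eq_top_iff.2 fun x _ => ?_
  obtain ⟨w, rfl⟩ := RingQuot.mkAlgHom_surjective F (Rel F q n) x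
  have := key w 1 (AffData.fin_le_XS (one_mem _) trivial)
  rwa [mul_one] at this

variable {q n}

/-- The action of `H_n` on rational functions with values in `H_n`. -/
noncomputable def ratRep : H F q n →ₐ[F] RatEnd F n (H F q n) :=
  (affData q n).toFinData.ratData.lift

theorem ratRep_fin {h : H F q n} (hh : h ∈ (affData q n).fin) (a : H F q n) :
    ratRep h (tm 1 a) = tm 1 (h * a) := by
  induction hh using Algebra.adjoin_induction generalizing a with
  | mem x hx =>
    rcases hx with ⟨i, rfl⟩ | ⟨i, rfl⟩
    · rw [ratRep, AffData.lift_C]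
      exact FinData.opC_one_tm _ i a
    · rw [ratRep, AffData.lift_T]
      exact FinData.opT_one_tm _ i a
  | algebraMap c =>
    rw [AlgHom.commutes, ← Algebra.smul_def, tm_smul]
    rfl
  | add x y _ _ hx hy => rw [map_add, LinearMap.add_apply, hx, hy, add_mul, tm_add]
  | mul x y _ _ hx hy => rw [map_mul, Module.End.mul_apply, hy, hx, mul_assoc]

theorem ratRep_mon (α : Fin n → ℤ) :
    ratRep ((affData q n).mon α) = opMul (H F q n) (mono F α) := by
  induction α using lattice_induction with
  | h0 => rw [AffData.mon_zero, map_one, mono_zero, map_one]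
  | hadd i α ih =>
    rw [AffData.mon_add, map_mul, ih, AffData.mon_single_one, mono_add, map_mul, ratRep,
      AffData.lift_X]
    rfl
  | hsub i α ih =>
    rw [AffData.mon_add, map_mul, ih, AffData.mon_neg_single_one, mono_add, map_mul, ratRep,
      AffData.lift_Xinv, mono_neg]
    rfl

theorem exists_dual_mono (lam : Fin n → ℤ) :
    ∃ φ : RatFn F n →ₗ[F] F, ∀ β, φ (mono F β) = if β = lam then 1 else 0 := by
  obtain ⟨g, hg⟩ := LinearMap.exists_leftInverse_of_injective
    (Finsupp.linearCombination F (mono F (n := n)))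
    (LinearMap.ker_eq_bot.2 (linearIndependent_mono F))
  refine ⟨Finsupp.lapply lam ∘ₗ g, fun β => ?_⟩
  have h := LinearMap.congr_fun hg (Finsupp.single β 1)
  rw [LinearMap.comp_apply, Finsupp.linearCombination_single, one_smul, LinearMap.id_apply] at h
  rw [LinearMap.comp_apply, h, Finsupp.lapply_apply, Finsupp.single_apply]

theorem exists_coeff (lam : Fin n → ℤ) : ∃ φ : H F q n →ₗ[F] H F q n,
    ∀ β, ∀ h ∈ (affData q n).fin, φ ((affData q n).mon β * h) = if β = lam then h else 0 := by
  obtain ⟨φ, hφ⟩ := exists_dual_mono (F := F) lam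
  let ev : RatMod F n (H F q n) →ₗ[F] H F q n :=
    (TensorProduct.lid F (H F q n)).toLinearMap ∘ₗ LinearMap.rTensor (H F q n) φ
  have hev : ∀ k a, ev (tm k a) = φ k • a := fun k a => rfl
  refine ⟨ev ∘ₗ LinearMap.applyₗ (tm 1 1) ∘ₗ ratRep.toLinearMap, fun β h hh => ?_⟩
  have : ratRep ((affData q n).mon β * h) (tm 1 1) = tm (mono F β) h := by
    rw [map_mul, Module.End.mul_apply, ratRep_fin hh, mul_one, ratRep_mon, opMul_tm, mul_one]
  change ev (ratRep ((affData q n).mon β * h) (tm 1 1)) = _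
  rw [this, hev, hφ]
  split_ifs
  · rw [one_smul]
  · rw [zero_smul]

end Standard

section Sequence

variable {F} {ξ : F} {n : ℕ} {A : Type*} [Ring A] [Algebra F A]

namespace FinData

variable (D : FinData F ξ n A)

/-- The elements of the finite subalgebra that are invertible in it. -/
def IsFinUnit (u : A) : Prop := u ∈ D.fin ∧ ∃ v ∈ D.fin, u * v = 1 ∧ v * u = 1

variable {D}

theorem IsFinUnit.mul {u v : A} (hu : D.IsFinUnit u) (hv : D.IsFinUnit v) :
    D.IsFinUnit (u * v) := by
  obtain ⟨hu, u', hu', h1, h2⟩ := hu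
  obtain ⟨hv, v', hv', h3, h4⟩ := hv
  refine ⟨mul_mem hu hv, v' * u', mul_mem hv' hu', ?_, ?_⟩
  · rw [mul_assoc, ← mul_assoc v, h3, one_mul, h1]
  · rw [mul_assoc, ← mul_assoc u', h2, one_mul, h4]

theorem isFinUnit_one : D.IsFinUnit 1 := ⟨one_mem _, 1, one_mem _, mul_one 1, mul_one 1⟩

theorem isFinUnit_of_quad {u : A} (hu : u ∈ D.fin) (h : u * u = ξ • u + 1) : D.IsFinUnit u :=
  ⟨hu, u - ξ • 1, sub_mem hu (Subalgebra.smul_mem _ (one_mem _) ξ), quad_mul_sub h,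
    quad_sub_mul h⟩

end FinData

namespace AffData

variable (D : AffData F ξ n A) (d : ℕ) (aa : ℕ → F)

/-- The element `f_1`. -/
def felem : A :=
  if h : 0 < n then ∑ i ∈ Finset.range (d + 1), aa i • D.X (⟨0, h⟩ : Fin n) ^ i else 0

/-- The elements `f_{k+1}`. -/
def fs : ℕ → A
  | 0 => D.felem d aa
  | k + 1 => if h : k < n - 1 then D.Tstar ⟨k, h⟩ * fs k * D.T ⟨k, h⟩ else 0

variable {D d aa}

theorem mon_single_natCast (i : Fin n) (e : ℕ) : D.mon (Pi.single i (e : ℤ)) = D.X i ^ e := by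
  rw [mon_single, zpow_natCast, Units.val_pow_eq_pow_val]; rfl

theorem Tstar_mul_pow (i : Fin (n - 1)) (e : ℕ) :
    D.Tstar i * D.mon (Pi.single (lo i) ((e : ℤ) + 1))
        - D.mon (Pi.single (hi i) ((e : ℤ) + 1)) * (D.T i - ξ • 1) ∈
      D.XS {β | 0 < β (hi i) ∧ β (hi i) < (e : ℤ) + 1 ∧ ∀ j, hi i < j → β j = 0} := by
  induction e with
  | zero =>
    rw [Nat.cast_zero, zero_add, mon_single_one, mon_single_one, Tstar_mul_X_lo, sub_self]
    exact zero_mem _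
  | succ e ih =>
    set m := D.mon (Pi.single (lo i) ((e : ℤ) + 1)) with hm
    set m' := D.mon (Pi.single (hi i) ((e : ℤ) + 1)) with hm'
    have h1 : D.mon (Pi.single (lo i) (((e + 1 : ℕ) : ℤ) + 1)) = D.X (lo i) * m := by
      rw [hm, ← mon_single_one, ← mon_add, ← Pi.single_add, Nat.cast_succ, add_comm]
    have h2 : D.mon (Pi.single (hi i) (((e + 1 : ℕ) : ℤ) + 1)) = D.X (hi i) * m' := by
      rw [hm', ← mon_single_one, ← mon_add, ← Pi.single_add, Nat.cast_succ, add_comm]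
    have h3 : D.Tstar i * (D.X (lo i) * m) - D.X (hi i) * m' * (D.T i - ξ • 1) =
        D.X (hi i) * (D.Tstar i * m - m' * (D.T i - ξ • 1))
          - ξ • (D.X (hi i) * (D.CC i * m)) - ξ • (D.X (hi i) * m) := by
      rw [← mul_assoc, Tstar_mul_X_lo, FinData.Tstar]
      simp only [mul_add, add_mul, mul_sub, sub_mul, smul_mul_assoc, mul_smul_comm, mul_assoc,
        mul_one]
      abel
    have hne := lo_ne_hi i
    rw [h1, h2, h3]
    refine sub_mem (sub_mem (X_mul_XS ?_ ih) (Submodule.smul_mem _ _ ?_))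
      (Submodule.smul_mem _ _ ?_)
    · rintro β ⟨hb1, hb2, hb3⟩
      refine ⟨?_, ?_, fun j hj => ?_⟩
      · rw [Pi.add_apply, Pi.single_eq_same]; omega
      · rw [Pi.add_apply, Pi.single_eq_same]; push_cast; omega
      · rw [Pi.add_apply, Pi.single_eq_of_ne hj.ne', hb3 j hj, zero_add]
    · rw [hm, CC_mul_mon, ← mul_assoc, ← mon_single_one, ← mon_add]
      refine mon_mul_mem_XS ⟨?_, ?_, fun j hj => ?_⟩ (D.CC_mem i)
      · simp [flipLattice_apply, hne.symm]
      · simp [flipLattice_apply, hne.symm]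
      · have : j ≠ lo i := by rintro rfl; simp [lo, hi, Fin.lt_def] at hj
        simp [flipLattice_apply, hj.ne', this]
    · rw [hm, ← mon_single_one, ← mon_add]
      refine mon_mem_XS ⟨?_, ?_, fun j hj => ?_⟩
      · simp [hne.symm]
      · simp [hne.symm]
      · have : j ≠ lo i := by rintro rfl; simp [lo, hi, Fin.lt_def] at hj
        simp [hj.ne', this]

variable (d) in
/-- The exponents occurring in the middle part of `f_{k+1}`. -/
def midExp (k : Fin n) : Set (Fin n → ℤ) :=
  {β | 0 < β k ∧ β k < d ∧ ∀ j, k < j → β j = 0}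

theorem Tstar_mul_mid {i : Fin (n - 1)} {x : A} (hx : x ∈ D.XS (midExp d (lo i))) :
    D.Tstar i * x ∈ D.XS (midExp d (hi i)) := by
  refine mul_mem_XS_of_mon ?_ hx
  rintro β ⟨h1, h2, h3⟩
  obtain ⟨e, he⟩ : ∃ e : ℕ, β (lo i) = (e : ℤ) + 1 := ⟨(β (lo i) - 1).toNat, by omega⟩
  have hne := lo_ne_hi i
  have hlt : lo i < hi i := by simp [lo, hi, Fin.lt_def]
  set γ := β - Pi.single (lo i) ((e : ℤ) + 1) with hγ
  have hγ1 : γ (lo i) = 0 := by simp [hγ, he]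
  have hγ2 : γ (hi i) = 0 := by simp [hγ, hne.symm, h3 _ hlt]
  have hγ3 : ∀ j, hi i < j → γ j = 0 := fun j hj => by
    simp [hγ, (hlt.trans hj).ne', h3 j (hlt.trans hj)]
  have hβ : β = γ + Pi.single (lo i) ((e : ℤ) + 1) := by rw [hγ, sub_add_cancel]
  rw [hβ, mon_add, ← mul_assoc, D.Tstar_mul_mon hγ1 hγ2, mul_assoc]
  have key := Tstar_mul_pow (D := D) i e
  rw [← sub_add_cancel (D.Tstar i * D.mon (Pi.single (lo i) ((e : ℤ) + 1)))
    (D.mon (Pi.single (hi i) ((e : ℤ) + 1)) * (D.T i - ξ • 1)), mul_add]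
  refine add_mem (mon_mul_XS ?_ key) ?_
  · rintro δ ⟨hd1, hd2, hd3⟩
    refine ⟨?_, ?_, fun j hj => ?_⟩
    · rw [Pi.add_apply, hγ2]; omega
    · rw [Pi.add_apply, hγ2]; omega
    · rw [Pi.add_apply, hγ3 j hj, hd3 j hj, zero_add]
  · rw [← mul_assoc, ← mon_add]
    refine mon_mul_mem_XS ⟨?_, ?_, fun j hj => ?_⟩
      (sub_mem (D.T_mem i) (Subalgebra.smul_mem _ (one_mem _) ξ))
    · rw [Pi.add_apply, hγ2, Pi.single_eq_same]; omega
    · rw [Pi.add_apply, hγ2, Pi.single_eq_same]; omega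
    · rw [Pi.add_apply, hγ3 j hj, Pi.single_eq_of_ne hj.ne', zero_add]

theorem fs_expansion (hf : GoodPoly F d aa) (k : ℕ) (hk : k < n) :
    ∃ r ∈ D.XS (midExp d ⟨k, hk⟩), ∃ u, D.IsFinUnit u ∧
      D.fs d aa k = D.mon (Pi.single ⟨k, hk⟩ (d : ℤ)) + r + u := by
  obtain ⟨hd, had, hrec, -⟩ := hf
  induction k with
  | zero =>
    have ha : aa 0 * aa 0 = 1 := by
      have := hrec d le_rfl
      rw [had, Nat.sub_self] at this
      exact this.symm
    refine ⟨∑ i ∈ Finset.Ico 1 d, aa i • D.X ⟨0, hk⟩ ^ i, ?_, aa 0 • 1, ?_, ?_⟩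
    · refine Submodule.sum_mem _ fun i hi => Submodule.smul_mem _ _ ?_
      rw [Finset.mem_Ico] at hi
      rw [← mon_single_natCast]
      refine mon_mem_XS ⟨?_, ?_, fun j hj => ?_⟩
      · rw [Pi.single_eq_same]; omega
      · rw [Pi.single_eq_same]; omega
      · rw [Pi.single_eq_of_ne hj.ne']
    · have h1 : (aa 0 • (1 : A)) * (aa 0 • 1) = 1 := by
        rw [smul_mul_smul_comm, ha, one_smul, mul_one]
      have h2 : aa 0 • (1 : A) ∈ D.fin := Subalgebra.smul_mem _ (one_mem _) _
      exact ⟨h2, _, h2, h1, h1⟩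
    · rw [fs, felem, dif_pos hk, Finset.sum_range_succ, had, one_smul, mon_single_natCast,
        Finset.range_eq_Ico, Finset.sum_eq_sum_Ico_succ_bot (by omega), pow_zero]
      abel
  | succ k ih =>
    obtain ⟨r, hr, u, hu, h⟩ := ih (by omega)
    have hk' : k < n - 1 := by omega
    set i : Fin (n - 1) := ⟨k, hk'⟩ with hi'
    have hlo : (⟨k, by omega⟩ : Fin n) = lo i := rfl
    have hhi : (⟨k + 1, hk⟩ : Fin n) = hi i := rfl
    rw [hlo] at hr h
    rw [hhi]
    obtain ⟨e, he⟩ : ∃ e : ℕ, (d : ℤ) = (e : ℤ) + 1 := ⟨d - 1, by omega⟩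
    have key := Tstar_mul_pow (D := D) i e
    rw [← he] at key
    set p := D.Tstar i * D.mon (Pi.single (lo i) (d : ℤ))
        - D.mon (Pi.single (hi i) (d : ℤ)) * (D.T i - ξ • 1) with hp
    refine ⟨(p + D.Tstar i * r) * D.T i, mul_mem_XS (add_mem key (Tstar_mul_mid hr)) (D.T_mem i),
      D.Tstar i * u * D.T i, ((FinData.isFinUnit_of_quad (D.Tstar_mem i) (D.Tstar_sq i)).mul
        hu).mul (FinData.isFinUnit_of_quad (D.T_mem i) (D.T_sq i)), ?_⟩
    rw [fs, dif_pos hk', h, hp]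
    have h0 : D.mon (Pi.single (hi i) (d : ℤ)) * (D.T i - ξ • 1) * D.T i =
        D.mon (Pi.single (hi i) (d : ℤ)) := by
      rw [mul_assoc, quad_sub_mul (D.T_sq i), mul_one]
    simp only [mul_add, add_mul, sub_mul (D.Tstar i * _), h0]
    abel

theorem fs_commute {k : ℕ} {j : Fin n} (hkj : k < j) (e : ℤ) :
    Commute (D.fs d aa k) (D.mon (Pi.single j e)) := by
  induction k with
  | zero =>
    rw [fs, felem]
    split_ifs with h
    · refine Commute.sum_left _ _ _ fun i _ => Commute.smul_left ?_ _
      rw [← mon_single_natCast]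
      exact D.mon_comm _ _
    · exact Commute.zero_left _
  | succ k ih =>
    rw [fs]
    split_ifs with h
    · have h1 : (Pi.single j e : Fin n → ℤ) (lo ⟨k, h⟩) = 0 :=
        Pi.single_eq_of_ne (by rintro rfl; simp [lo] at hkj) _
      have h2 : (Pi.single j e : Fin n → ℤ) (hi ⟨k, h⟩) = 0 :=
        Pi.single_eq_of_ne (by rintro rfl; simp [hi] at hkj) _
      exact ((show Commute _ _ from D.Tstar_mul_mon h1 h2).mul_left (ih (by omega))).mul_left
        (D.T_mul_mon h1 h2)
    · exact Commute.zero_left _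

/-- The exponents supported on the first `k` coordinates. -/
def lowExp (k : ℕ) : Set (Fin n → ℤ) := {β | ∀ j : Fin n, k ≤ j → β j = 0}

theorem fs_mul_low {k m : ℕ} (hkm : k < m) {x : A} (hx : x ∈ D.XS (lowExp m)) :
    D.fs d aa k * x ∈ D.XS (lowExp m) := by
  induction k generalizing x with
  | zero =>
    rw [fs, felem]
    split_ifs with h
    · rw [Finset.sum_mul]
      refine Submodule.sum_mem _ fun i _ => ?_
      rw [smul_mul_assoc, ← mon_single_natCast]
      refine Submodule.smul_mem _ _ (mon_mul_XS (fun β hβ j hj => ?_) hx)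
      rw [Pi.add_apply, hβ j hj, Pi.single_eq_of_ne, zero_add]
      rintro rfl
      simp at hj; omega
    · rw [zero_mul]; exact zero_mem _
  | succ k ih =>
    rw [fs]
    split_ifs with h
    · set i : Fin (n - 1) := ⟨k, h⟩
      have hlo : ∀ j : Fin n, m ≤ j → j ≠ lo i := by
        rintro _ hj rfl; simp [lo, i] at hj; omega
      have hhi : ∀ j : Fin n, m ≤ j → j ≠ hi i := by
        rintro _ hj rfl; simp [hi, i] at hj; omega
      have hT : ∀ {y : A}, y ∈ D.XS (lowExp m) → D.T i * y ∈ D.XS (lowExp m) :=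
        T_mul_XS fun β hβ γ hγ j hj => by rw [hγ j (hlo j hj) (hhi j hj), hβ j hj]
      have hC : ∀ {l : Fin n} {y : A}, y ∈ D.XS (lowExp m) → D.C l * y ∈ D.XS (lowExp m) :=
        C_mul_XS fun β hβ j hj => by rw [flipLattice_apply, hβ j hj, neg_zero, ite_self]
      rw [mul_assoc, mul_assoc, FinData.Tstar, add_mul, smul_mul_assoc, FinData.CC,
        mul_assoc (D.C _)]
      have hy := ih (by omega) (hT hx)
      exact add_mem (hT hy) (Submodule.smul_mem _ _ (hC (hC hy)))
    · rw [zero_mul]; exact zero_mem _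

end AffData

end Sequence

section Triangular

variable {F} {ξ : F} {n : ℕ} {A : Type*} [Ring A] [Algebra F A]

namespace AffData

variable {D : AffData F ξ n A}

theorem existsUnique_sum_of_triangular {ι O : Type*} [LinearOrder O]
    (wt : (Fin n → ℤ) → O) (hwf : WellFounded ((· < ·) : O → O → Prop))
    (hspan : D.XS Set.univ = ⊤)
    (hcoeff : ∀ lam, ∃ φ : A →ₗ[F] A,
      ∀ β, ∀ h ∈ D.fin, φ (D.mon β * h) = if β = lam then h else 0)
    {L : ι → Fin n → ℤ} (hL : Function.Bijective L) {w : ι → A}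
    (hw : ∀ p, ∃ u, D.IsFinUnit u ∧ w p - D.mon (L p) * u ∈ D.XS {β | wt β < wt (L p)}) (x : A) :
    ∃! c : ι →₀ D.fin, x = c.sum fun p b => w p * (b : A) := by
  classical
  let W : (ι →₀ D.fin) →ₗ[F] A :=
    Finsupp.lsum F fun p => LinearMap.mulLeft F (w p) ∘ₗ D.fin.val.toLinearMap
  have hW : ∀ c, W c = c.sum fun p b => w p * (b : A) := fun c => rfl
  have hmon : ∀ lam, ∀ h ∈ D.fin, D.mon lam * h ∈ LinearMap.range W := by
    intro lam
    induction hlam : wt lam using hwf.induction generalizing lam with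
    | _ o ih =>
      intro h hh
      obtain ⟨p, rfl⟩ := hL.2 lam
      obtain ⟨u, ⟨-, v, hv, huv, -⟩, hp⟩ := hw p
      have h1 := map_mem_of_mem_XS (N := LinearMap.range W) LinearMap.id
        (fun β hβ k hk => ih (wt β) (hlam ▸ hβ) β rfl k hk) (mul_mem_XS hp (mul_mem hv hh))
      have h2 : w p * (v * h) ∈ LinearMap.range W :=
        ⟨Finsupp.single p ⟨v * h, mul_mem hv hh⟩, by
          rw [hW, Finsupp.sum_single_index]; exact mul_zero _⟩
      have h3 : D.mon (L p) * h = w p * (v * h) - (w p - D.mon (L p) * u) * (v * h) := by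
        rw [sub_mul, sub_sub_cancel, mul_assoc, ← mul_assoc u, huv, one_mul]
      rw [h3]
      exact sub_mem h2 h1
  have hsurj : ∀ y, y ∈ LinearMap.range W := fun y =>
    map_mem_of_mem_XS LinearMap.id (fun β _ h hh => hmon β h hh)
      (show y ∈ D.XS Set.univ from hspan ▸ Submodule.mem_top)
  have hinj : ∀ c, W c = 0 → c = 0 := by
    intro c hc
    by_contra hne
    obtain ⟨p₀, hp₀, hmax⟩ := c.support.exists_max_image (fun p => wt (L p))
      (Finsupp.support_nonempty_iff.2 hne)
    obtain ⟨φ, hφ⟩ := hcoeff (L p₀)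
    choose u hu hrest using hw
    have hval : ∀ p ∈ c.support, φ (w p * (c p : A)) = if p = p₀ then u p * (c p : A) else 0 := by
      intro p hp
      have h1 : φ ((w p - D.mon (L p) * u p) * (c p : A)) ∈ (⊥ : Submodule F A) := by
        refine map_mem_of_mem_XS φ (fun β hβ h hh => ?_) (mul_mem_XS (hrest p) (c p).2)
        rw [hφ β h hh, if_neg, Submodule.mem_bot]
        rintro rfl
        exact absurd (hmax p hp) (not_le.2 hβ)
      rw [Submodule.mem_bot, sub_mul, map_sub, sub_eq_zero, mul_assoc,
        hφ _ _ (mul_mem (hu p).1 (c p).2)] at h1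
      simpa only [hL.1.eq_iff] using h1
    have h0 : u p₀ * (c p₀ : A) = 0 := by
      have h1 : φ (W c) = ∑ p ∈ c.support, φ (w p * (c p : A)) := by
        rw [hW, Finsupp.sum, map_sum]
      rw [hc, map_zero, Finset.sum_congr rfl hval, Finset.sum_ite_eq', if_pos hp₀] at h1
      exact h1.symm
    obtain ⟨-, v, -, -, hvu⟩ := hu p₀
    refine Finsupp.mem_support_iff.1 hp₀ (Subtype.ext ?_)
    have h1 := congrArg (v * ·) h0
    simpa only [← mul_assoc, hvu, one_mul, mul_zero, ZeroMemClass.coe_zero] using h1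
  obtain ⟨c, hc⟩ := hsurj x
  refine ⟨c, hc.symm.trans (hW c), fun c' hc' => ?_⟩
  rw [← sub_eq_zero]
  refine hinj _ ?_
  rw [map_sub, hc, hW, ← hc', sub_self]

variable (D) (d : ℕ) (aa : ℕ → F)

/-- The product of the `f_z` over `z ∈ Z`, in increasing order. -/
def fZ (Z : Finset (Fin n)) : A := ((Z.sort (· ≤ ·)).map fun z : Fin n => D.fs d aa (z : ℕ)).prod

variable {D d aa}

theorem fZ_insert {Z : Finset (Fin n)} {k : Fin n} (hZ : ∀ z ∈ Z, z < k) :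
    D.fZ d aa (insert k Z) = D.fZ d aa Z * D.fs d aa k := by
  have hk : k ∉ Z := fun h => (hZ k h).false
  have : (insert k Z).sort (· ≤ ·) = Z.sort (· ≤ ·) ++ [k] := by
    refine List.Perm.eq_of_pairwise (le := (· ≤ ·)) (fun a b _ _ h1 h2 => le_antisymm h1 h2)
      (Finset.pairwise_sort _ _) ?_ ?_
    · refine List.pairwise_append.2 ⟨Finset.pairwise_sort _ _, List.pairwise_singleton _ _, ?_⟩
      intro a ha b hb
      rw [List.mem_singleton.1 hb]
      exact (hZ a ((Finset.mem_sort _).1 ha)).le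
    · refine (List.perm_ext_iff_of_nodup (Finset.sort_nodup _ _) ?_).2 fun a => ?_
      · refine List.nodup_append.2 ⟨Finset.sort_nodup _ _, List.nodup_singleton _, ?_⟩
        intro a ha b hb
        rw [List.mem_singleton.1 hb]
        exact (hZ a ((Finset.mem_sort _).1 ha)).ne
      · simp [or_comm]
  rw [fZ, this, List.map_append, List.prod_append, List.map_singleton, List.prod_singleton, fZ]

theorem fZ_mul_low {Z : Finset (Fin n)} {k : ℕ} (hZ : ∀ z ∈ Z, (z : ℕ) < k) {x : A}
    (hx : x ∈ D.XS (lowExp k)) : D.fZ d aa Z * x ∈ D.XS (lowExp k) := by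
  have : ∀ l : List (Fin n), (∀ z ∈ l, (z : ℕ) < k) →
      (l.map fun z : Fin n => D.fs d aa (z : ℕ)).prod * x ∈ D.XS (lowExp k) := by
    intro l
    induction l with
    | nil => intro _; rwa [List.map_nil, List.prod_nil, one_mul]
    | cons z l ih =>
      intro hl
      rw [List.map_cons, List.prod_cons, mul_assoc]
      exact fs_mul_low (hl z List.mem_cons_self) (ih fun y hy => hl y (List.mem_cons_of_mem _ hy))
  exact this _ fun z hz => hZ z ((Finset.mem_sort _).1 hz)

theorem fZ_commute {Z : Finset (Fin n)} {k : Fin n} (hZ : ∀ z ∈ Z, z < k) (e : ℤ) :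
    Commute (D.fZ d aa Z) (D.mon (Pi.single k e)) := by
  refine Commute.list_prod_left _ _ fun y hy => ?_
  obtain ⟨z, hz, rfl⟩ := List.mem_map.1 hy
  exact fs_commute (hZ z ((Finset.mem_sort _).1 hz)) e

theorem fZ_mul_mid {Z : Finset (Fin n)} {k : Fin n} (hZ : ∀ z ∈ Z, z < k) {x : A}
    (hx : x ∈ D.XS (midExp d k)) : D.fZ d aa Z * x ∈ D.XS (midExp d k) := by
  refine mul_mem_XS_of_mon ?_ hx
  rintro β ⟨h1, h2, h3⟩
  have hβ : β - Pi.single k (β k) ∈ lowExp (n := n) k := by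
    intro j hj
    rcases hj.lt_or_eq with hj | hj
    · have : k < j := hj
      simp [h3 j this, this.ne']
    · have : k = j := Fin.ext hj
      simp [← this]
  rw [← add_sub_cancel (Pi.single k (β k)) β, mon_add, ← mul_assoc, (fZ_commute hZ _).eq, mul_assoc]
  refine mon_mul_XS (fun γ hγ => ?_) (fZ_mul_low hZ (mon_mem_XS hβ))
  have h4 : γ k = 0 := hγ k le_rfl
  refine ⟨by simpa [h4] using h1, by simpa [h4] using h2, fun j hj => ?_⟩
  simp [hγ j hj.le, hj.ne']

end AffData

/-- The distance of an exponent from the interval `[0, d)`. -/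
def rho (d : ℕ) (e : ℤ) : ℕ :=
  if e < 0 then (-e).toNat else if e < d then 0 else (e - d + 1).toNat

/-- The weight of an exponent vector, compared lexicographically from the last entry. -/
def wt (d : ℕ) (β : Fin n → ℤ) : Colex (Fin n → ℕ) := toColex fun i => rho d (β i)

theorem wt_lt_iff {d : ℕ} {β γ : Fin n → ℤ} : wt d β < wt d γ ↔
    ∃ i, (∀ j, i < j → rho d (β j) = rho d (γ j)) ∧ rho d (β i) < rho d (γ i) := Iff.rfl

/-- The exponent vector of the leading term of `X^α f_Z`. -/
def lead (d : ℕ) (α : Fin n → ℤ) (Z : Finset (Fin n)) (i : Fin n) : ℤ :=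
  if i ∈ Z ∧ 0 ≤ α i then α i + d else α i

open AffData in
theorem wt_add_single_lt {d : ℕ} {k : Fin n} {β γ : Fin n → ℤ} (hβ : β ∈ lowExp (n := n) k)
    (hγ : γ ∈ lowExp (n := n) k) (c : ℤ) (h : wt d β < wt d γ) :
    wt d (Pi.single k c + β) < wt d (Pi.single k c + γ) := by
  obtain ⟨i, h1, h2⟩ := wt_lt_iff.1 h
  have hi : i < k := by
    by_contra hik
    have hki : (k : ℕ) ≤ i := not_lt.1 hik
    rw [hβ i hki, hγ i hki] at h2
    exact h2.false
  refine wt_lt_iff.2 ⟨i, fun j hj => ?_, by simpa [hi.ne] using h2⟩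
  rcases eq_or_ne j k with rfl | hjk
  · simp [hβ j le_rfl, hγ j le_rfl]
  · simpa [hjk] using h1 j hj

open AffData in
theorem wt_lt_of_rho_lt {d : ℕ} {k : Fin n} {β γ : Fin n → ℤ}
    (hβ : β ∈ lowExp (n := n) (k + 1)) (hγ : γ ∈ lowExp (n := n) (k + 1))
    (h : rho d (β k) < rho d (γ k)) : wt d β < wt d γ :=
  wt_lt_iff.2 ⟨k, fun j hj => by rw [hβ j hj, hγ j hj], h⟩

open AffData in
theorem single_add_mem_lowExp {k : Fin n} {β : Fin n → ℤ} (hβ : β ∈ lowExp (n := n) k) (c : ℤ) :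
    Pi.single k c + β ∈ lowExp (n := n) (k + 1) := by
  intro j hj
  have : k < j := hj
  simp [hβ j this.le, this.ne']

theorem lead_bijective {d : ℕ} :
    Function.Bijective fun p : PiIdx n d => lead d p.1.1 p.1.2 := by
  constructor
  · rintro ⟨⟨α, Z⟩, hα⟩ ⟨⟨β, Y⟩, hβ⟩ h
    have key : ∀ i, (i ∈ Z ↔ i ∈ Y) ∧ α i = β i := by
      intro i
      have h1 : lead d α Z i = lead d β Y i := congrFun h i
      have h2 := hα i
      have h3 := hβ i
      simp only [lead] at h1 h2 h3
      by_cases hZ : i ∈ Z <;> by_cases hY : i ∈ Y <;> simp only [hZ, hY, true_and, false_and,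
        not_true, not_false_iff, true_imp_iff, if_false, true_iff, false_iff] at h1 h2 h3 ⊢ <;>
        (try split_ifs at h1) <;> omega
    obtain rfl : Z = Y := Finset.ext fun i => (key i).1
    obtain rfl : α = β := funext fun i => (key i).2
    rfl
  · intro lam
    refine ⟨⟨⟨fun i => if (d : ℤ) ≤ lam i then lam i - d else lam i,
      Finset.univ.filter fun i => lam i < 0 ∨ (d : ℤ) ≤ lam i⟩, fun i hi => ?_⟩, funext fun i => ?_⟩
    · simp only [Finset.mem_filter, Finset.mem_univ, true_and] at hi
      dsimp only
      split_ifs <;> omega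
    · simp only [lead, Finset.mem_filter, Finset.mem_univ, true_and]
      split_ifs <;> omega

namespace AffData

variable {D : AffData F ξ n A} {d : ℕ} {aa : ℕ → F}

theorem lead_expansion_aux (hf : GoodPoly F d aa) (k : ℕ) (hk : k ≤ n) {α : Fin n → ℤ}
    (hα : α ∈ lowExp (n := n) k) {Z : Finset (Fin n)} (hZ : ∀ z ∈ Z, (z : ℕ) < k) :
    ∃ u, D.IsFinUnit u ∧ D.mon α * D.fZ d aa Z - D.mon (lead d α Z) * u ∈
      D.XS {β | β ∈ lowExp (n := n) k ∧ wt d β < wt d (lead d α Z)} := by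
  induction k generalizing α Z with
  | zero =>
    obtain rfl : α = 0 := funext fun i => hα i (Nat.zero_le _)
    obtain rfl : Z = ∅ := Finset.eq_empty_of_forall_notMem fun z hz => Nat.not_lt_zero _ (hZ z hz)
    refine ⟨1, FinData.isFinUnit_one, ?_⟩
    have : lead d (0 : Fin n → ℤ) ∅ = 0 := by ext i; simp [lead]
    rw [this, fZ, Finset.sort_empty, List.map_nil, List.prod_nil, sub_self]
    exact zero_mem _
  | succ m ih =>
    obtain ⟨k, rfl⟩ : ∃ k : Fin n, (k : ℕ) = m := ⟨⟨m, hk⟩, rfl⟩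
    set a := α k with ha
    set α' := α - Pi.single k a with hα'
    set Z' := Z.erase k with hZ'
    have hαlow : α' ∈ lowExp (n := n) k := by
      intro j hj
      rcases hj.lt_or_eq with hj | hj
      · have : k < j := hj
        simp [hα', hα j hj, this.ne']
      · have : k = j := Fin.ext hj
        simp [hα', ← this, ha]
    have hZlt : ∀ z ∈ Z', z < k := fun z hz =>
      lt_of_le_of_ne (Nat.lt_succ_iff.1 (hZ z (Finset.mem_of_mem_erase hz)))
        (Finset.ne_of_mem_erase hz)
    obtain ⟨u', hu', hy⟩ := ih (Nat.le_of_succ_le hk) hαlow hZlt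
    have hmonα : D.mon α = D.mon (Pi.single k a) * D.mon α' := by
      rw [← mon_add, hα', add_sub_cancel]
    have hlead' : lead d α' Z' ∈ lowExp (n := n) k := by
      intro j hj
      have : j ∉ Z' := fun h => (hZlt j h).not_ge hj
      simp [lead, this, hαlow j hj]
    set y := D.mon α' * D.fZ d aa Z' with hydef
    have hylow : y ∈ D.XS (lowExp k) := by
      have h1 : D.fZ d aa Z' * 1 ∈ D.XS (lowExp k) :=
        fZ_mul_low hZlt (fin_le_XS (one_mem _) fun j _ => rfl)
      rw [mul_one] at h1
      exact mon_mul_XS (fun β hβ j hj => by simp [hαlow j hj, hβ j hj]) h1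
    have hleadα : ∀ c, (if k ∈ Z ∧ 0 ≤ a then a + d else a) = c →
        lead d α Z = Pi.single k c + lead d α' Z' := by
      rintro c rfl
      ext j
      rcases eq_or_ne j k with rfl | hjk
      · rw [Pi.add_apply, Pi.single_eq_same, hlead' j le_rfl, add_zero, lead]
      · simp [lead, hjk, hα', hZ']
    -- shifting the induction hypothesis in the `k`-th coordinate
    have hmain : ∀ c, D.mon (Pi.single k c) * y - D.mon (Pi.single k c + lead d α' Z') * u' ∈
        D.XS {β | β ∈ lowExp (n := n) (k + 1) ∧
          wt d β < wt d (Pi.single k c + lead d α' Z')} := by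
      intro c
      rw [mon_add, mul_assoc, ← mul_sub]
      exact mon_mul_XS (fun β hβ => ⟨single_add_mem_lowExp hβ.1 c,
        wt_add_single_lt hβ.1 hlead' c hβ.2⟩) hy
    by_cases hkZ : k ∈ Z
    · obtain ⟨r, hr, u, hu, hfk⟩ := fs_expansion (D := D) hf k k.2
      rw [Fin.eta] at hr hfk
      have hd : 1 ≤ d := hf.1
      have hprod : D.mon α * D.fZ d aa Z = D.mon (Pi.single k (a + d)) * y
          + D.mon (Pi.single k a) * (y * r) + D.mon (Pi.single k a) * (y * u) := by
        have hcomm : y * D.mon (Pi.single k (d : ℤ)) = D.mon (Pi.single k (d : ℤ)) * y := by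
          rw [hydef, mul_assoc, (fZ_commute hZlt _).eq, ← mul_assoc, D.mon_comm, mul_assoc]
        rw [← Finset.insert_erase hkZ, fZ_insert hZlt, hmonα, mul_assoc, ← mul_assoc (D.mon α'),
          ← hydef, hfk, mul_add, mul_add, mul_add, mul_add, hcomm, ← mul_assoc, ← mon_add,
          ← Pi.single_add]
      have hmid : ∀ c, (∀ b : ℤ, 0 < b → b < d → rho d (a + b) < rho d c) →
          D.mon (Pi.single k a) * (y * r) ∈ D.XS {β | β ∈ lowExp (n := n) (k + 1) ∧
            wt d β < wt d (Pi.single k c + lead d α' Z')} := by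
        intro c hc
        have h1 : y * r ∈ D.XS (midExp d k) := by
          rw [hydef, mul_assoc]
          refine mon_mul_XS (fun β hβ => ?_) (fZ_mul_mid hZlt hr)
          refine ⟨by simpa [hαlow k le_rfl] using hβ.1, by simpa [hαlow k le_rfl] using hβ.2.1,
            fun j hj => by simp [hαlow j hj.le, hβ.2.2 j hj]⟩
        refine mon_mul_XS (fun β hβ => ?_) h1
        have hlow : Pi.single k a + β ∈ lowExp (n := n) (k + 1) := by
          intro j hj
          have : k < j := hj
          simp [hβ.2.2 j this, this.ne']
        refine ⟨hlow, wt_lt_of_rho_lt hlow (single_add_mem_lowExp hlead' c) ?_⟩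
        simpa [hlead' k le_rfl] using hc _ hβ.1 hβ.2.1
      have hend : ∀ e c, rho d e < rho d c → D.mon (Pi.single k e) * y ∈
          D.XS {β | β ∈ lowExp (n := n) (k + 1) ∧
            wt d β < wt d (Pi.single k c + lead d α' Z')} := by
        intro e c hec
        refine mon_mul_XS (fun β hβ => ?_) hylow
        have hlow := single_add_mem_lowExp hβ e
        refine ⟨hlow, wt_lt_of_rho_lt hlow (single_add_mem_lowExp hlead' c) ?_⟩
        simpa [hlead' k le_rfl, hβ k le_rfl] using hec
      by_cases ha0 : 0 ≤ a
      · refine ⟨u', hu', ?_⟩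
        rw [hleadα (a + d) (if_pos ⟨hkZ, ha0⟩), hprod, add_assoc, add_sub_right_comm]
        refine add_mem (hmain _) (add_mem (hmid _ fun b h1 h2 => ?_) ?_)
        · unfold rho; split_ifs <;> omega
        · rw [← mul_assoc]
          refine mul_mem_XS (hend a _ ?_) hu.1
          unfold rho; split_ifs <;> omega
      · refine ⟨u' * u, hu'.mul hu, ?_⟩
        rw [hleadα a (if_neg fun h => ha0 h.2), hprod, add_sub_assoc, ← mul_assoc _ y u,
          ← mul_assoc _ u' u, ← sub_mul]
        refine add_mem (add_mem (hend _ _ ?_) (hmid _ fun b h1 h2 => ?_))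
          (mul_mem_XS (hmain a) hu.1)
        · unfold rho; split_ifs <;> omega
        · unfold rho; split_ifs <;> omega
    · refine ⟨u', hu', ?_⟩
      rw [hleadα a (if_neg fun h => hkZ h.1), hmonα, mul_assoc]
      have : Z = Z' := (Finset.erase_eq_of_notMem hkZ).symm
      rw [this]
      exact hmain a

theorem lead_expansion (hf : GoodPoly F d aa) (α : Fin n → ℤ) (Z : Finset (Fin n)) :
    ∃ u, D.IsFinUnit u ∧ D.mon α * D.fZ d aa Z - D.mon (lead d α Z) * u ∈
      D.XS {β | wt d β < wt d (lead d α Z)} := by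
  obtain ⟨u, hu, h⟩ := lead_expansion_aux (D := D) hf n le_rfl
    (α := α) (fun j hj => absurd j.2 hj.not_gt) (Z := Z) fun z _ => z.2
  exact ⟨u, hu, XS_mono (fun β hβ => hβ.2) h⟩

end AffData
end Triangular

section Comparison

variable {F} {q : F} {n : ℕ}

theorem mon_eq_Xmon (α : Fin n → ℤ) : (affData q n).mon α = Xmon F q α := by
  refine congrArg List.prod (List.map_congr_left fun i _ => ?_)
  rw [XZ]
  split_ifs with h
  · obtain ⟨m, hm⟩ := Int.eq_ofNat_of_zero_le h
    rw [hm, zpow_natCast, Units.val_pow_eq_pow_val]; rfl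
  · obtain ⟨m, hm⟩ := Int.eq_ofNat_of_zero_le (a := -α i) (by omega)
    rw [hm, ← neg_neg (α i), hm, zpow_neg, zpow_natCast, ← inv_pow, Units.val_pow_eq_pow_val]; rfl

theorem fs_eq_fseq (d : ℕ) (aa : ℕ → F) (k : ℕ) :
    (affData q n).fs d aa k = fseq F q n d aa k := by
  induction k with
  | zero => rfl
  | succ k ih =>
    rw [AffData.fs, fseq, ih]
    rfl

theorem fZ_eq_fZ (d : ℕ) (aa : ℕ → F) (Z : Finset (Fin n)) :
    (affData q n).fZ d aa Z = fZ F q n d aa Z := by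
  rw [AffData.fZ, fZ]
  simp only [fs_eq_fseq, List.pure_def, List.bind_eq_flatMap, ← List.map_eq_flatMap, List.map_map]
  rfl

end Comparison

/-- **Freeness of `H_n` over `H^fn_n`** (Lemma `hardb` of Brundan–Kleshchev):
`H_n` is a free right `H^fn_n`-module with basis `{X^α f_Z : (α, Z) ∈ Π_n}`, i.e.
every element of `H_n` has a unique expression `∑ X^α f_Z · b_{(α,Z)}` with
coefficients `b_{(α,Z)} ∈ H^fn_n` (almost all zero). -/
theorem free_over_finite_subalgebra
    (F : Type) [Field F] [IsAlgClosed F] (h2 : (2 : F) ≠ 0)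
    (q : F) (hq : GoodParam F q) (n : ℕ)
    (d : ℕ) (aa : ℕ → F) (hf : GoodPoly F d aa) :
    ∀ h : H F q n, ∃! c : PiIdx n d →₀ ↥(Hfin F q n),
      h = c.sum fun p b => Xmon F q p.1.1 * fZ F q n d aa p.1.2 * (b : H F q n) := by
  intro h
  have hwf : WellFoundedLT (Colex (Fin n → ℕ)) := Pi.Colex.wellFoundedLT
  refine AffData.existsUnique_sum_of_triangular (D := affData q n) (wt d) hwf.wf (XS_univ q n)
    exists_coeff lead_bijective (fun p => ?_) h
  rw [← mon_eq_Xmon, ← fZ_eq_fZ]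
  exact AffData.lead_expansion hf _ _

end HC
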